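/- arXiv:0712.1725 — 2 statements merged into one kernel-verified Lean document; each statement's English description precedes it below -/
import Mathlib

section
/- Let k be an algebraically closed field of characteristic 0 or p > 2, with the characteristic dividing neither m nor n, let ζ ∈ k be a primitive m-th root of unity, and let n ≥ 3. Let g ∈ GL(n,k) and let θ be the (outer) automorphism of SL(n,k) given by θ(x) = g·(ᵀx)⁻¹·g⁻¹; suppose θ has order exactly m and that m/2 is even. Set 𝔤(1) = {x ∈ sl(n,k) : −g·ᵀx·g⁻¹ = ζ·x}, H = {h ∈ SL(n,k) : θ(h) = h}, let c be a Cartan subspace of 𝔤(1) and r = dim c. Then (g·(ᵀg)⁻¹)^{m/2} = I or −I, and with respect to a suitable basis of c: if (g·(ᵀg)⁻¹)^{m/2} = −I, the little Weyl group of c with respect to H equals G(m,1,r); if (g·(ᵀg)⁻¹)^{m/2} = I, it equals G(m,1,r) when n > mr and there exists x ∈ GL(n,k) with det x = −1 such that g·(ᵀx)⁻¹·g⁻¹ = x and x commutes with every element of c, and it equals G(m,2,r) otherwise. -/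
/-!
Put `S = g⁻¹` and `η = (-ζ)⁻¹`, which is again a primitive `m`-th root of unity because `m / 2` is
even. The fixed points of `θ` are the isometries of the bilinear form `S`, and `𝔤(1)` consists of
the `x` with `S(η x u, v) = S(u, x v)`. Hence `S` pairs the weight space of `c` for `χ` only with
the one for `η χ`, and the asymmetry `A = S⁻¹ Sᵀ` maps weight `χ` to weight `η² χ`. As `θ` has order
`m`, `A ^ (m / 2)` is a scalar `l`, and `l = ±1` because `A` is an isometry.

Take one weight `χ` from each orbit of nonzero weights under scaling by `m`-th roots of unity, a
vector `v` of weight `χ`, and `w` of weight `η χ` with `S(v, w) = 1`. The chain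
`v, w, A v, A w, A² v, …` of length `m` spans a block on which `c` acts by multiples of the clock
matrix `diag(1, η, …, η ^ (m - 1))`, while `S` is the transpose of a cyclic shift twisted by `l`.
Different blocks are orthogonal, and by maximality `c` consists of all independent multiples of the
clock matrices, so it has a basis `b` with one element for each block.

Since `b i * b j = 0` for `i ≠ j` and `b i ^ (m + 1) = b i`, whatever normalizes `c` acts on `b` by
a matrix in `G(m,1,r)`. Conversely, permuting the blocks and applying powers of the twisted shift
inside them gives isometries that realize every such matrix; `a` shifts in total contribute the
determinant `(-l) ^ a` and the product of nonzero entries `η ^ (-a)`. For `l = -1` all these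
determinants are `1`. For `l = 1` the product determines the sign of the determinant, and the sign
can be corrected exactly when some isometry of determinant `-1` centralizes `c`. No such isometry
exists when the blocks fill the space: it would act on each block by a diagonal matrix
`diag(t, t⁻¹, t, t⁻¹, …)`, of determinant `1`.
-/

open Matrix

/-- The group `G(m,q,r)` of `r×r` monomial matrices whose nonzero entries are
`m`-th roots of unity and the product of whose nonzero entries is an
`(m/q)`-th root of unity, as a set of matrices. -/
def GmqrSet (k : Type*) [Field k] (m q r : ℕ) : Set (Matrix (Fin r) (Fin r) k) :=
  {w | ∃ σ : Equiv.Perm (Fin r),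
    (∀ i j, i ≠ σ j → w i j = 0) ∧
    (∀ j, w (σ j) j ^ m = 1) ∧
    (∏ j, w (σ j) j) ^ (m / q) = 1}

/-- A matrix is semisimple if it is diagonalizable. -/
def IsSemisimpleMat {k : Type*} [Field k] {N : Type*} [Fintype N] [DecidableEq N]
    (x : Matrix N N k) : Prop :=
  ∃ P : Matrix N N k, IsUnit P.det ∧ (P * x * P⁻¹).IsDiag

/-- `c` is a Cartan subspace of `g1`: a subspace of `g1`, consisting of
pairwise commuting diagonalizable matrices, and maximal among such. -/
def IsCartanSubspace {k : Type*} [Field k] {N : Type*} [Fintype N] [DecidableEq N]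
    (g1 : Set (Matrix N N k)) (c : Submodule k (Matrix N N k)) : Prop :=
  (c : Set (Matrix N N k)) ⊆ g1 ∧
  (∀ x ∈ c, ∀ y ∈ c, x * y = y * x) ∧
  (∀ x ∈ c, IsSemisimpleMat x) ∧
  ∀ c' : Submodule k (Matrix N N k),
    ((c' : Set (Matrix N N k)) ⊆ g1 ∧ (∀ x ∈ c', ∀ y ∈ c', x * y = y * x) ∧
      (∀ x ∈ c', IsSemisimpleMat x)) → c ≤ c' → c' = c

/-- The little Weyl group of `c` with respect to `H`, written with respect to
the family `b` (a basis of `c`): the set of matrices of the transformations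
`x ↦ h·x·h⁻¹` of `c`, for `h ∈ H` normalizing `c`. -/
def littleWeylSet {k : Type*} [Field k] {N : Type*} [Fintype N] [DecidableEq N] {r : ℕ}
    (H : Set (Matrix N N k)) (c : Submodule k (Matrix N N k))
    (b : Fin r → Matrix N N k) : Set (Matrix (Fin r) (Fin r) k) :=
  {w | ∃ h ∈ H, (∀ x ∈ c, h * x * h⁻¹ ∈ c) ∧ (∀ x ∈ c, h⁻¹ * x * h ∈ c) ∧
    ∀ j, h * b j * h⁻¹ = ∑ i, w i j • b i}

section Diagonalizable

open Module.End

variable {k : Type*} [Field k] {N : Type*} [Fintype N] [DecidableEq N]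

theorem iSup_eigenspace_mul_diagonal_mul_eq_top {I : Type*} [Fintype I] [DecidableEq I]
    {U : Matrix N I k} {V : Matrix I N k} (hVU : V * U = 1) (d : I → k) :
    ⨆ μ, eigenspace (toLin' (U * diagonal d * V)) μ = ⊤ := by
  have col_mem (i : I) : U.col i ∈ ⨆ μ, eigenspace (toLin' (U * diagonal d * V)) μ := by
    refine Submodule.mem_iSup_of_mem (d i) (mem_eigenspace_iff.2 ?_)
    rw [toLin'_apply, ← mulVec_single_one, mulVec_mulVec, Matrix.mul_assoc, hVU, Matrix.mul_one,
      ← mulVec_mulVec, diagonal_mulVec_single, mul_one, mulVec_single, mulVec_single]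
    ext; simp [mul_comm]
  refine eq_top_iff.2 fun z _ => ?_
  have ker_part : z - U *ᵥ (V *ᵥ z) ∈ ⨆ μ, eigenspace (toLin' (U * diagonal d * V)) μ := by
    refine Submodule.mem_iSup_of_mem 0 (mem_eigenspace_iff.2 ?_)
    rw [toLin'_apply, zero_smul, ← mulVec_mulVec, mulVec_sub,
      mulVec_mulVec (V *ᵥ z), hVU, one_mulVec, sub_self, mulVec_zero]
  rw [← sub_add_cancel z (U *ᵥ (V *ᵥ z))]
  refine add_mem ker_part ?_
  simp only [mulVec_eq_sum, op_smul_eq_smul]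
  exact sum_mem fun i _ => Submodule.smul_mem _ _ (col_mem i)

theorem isSemisimpleMat_iff_iSup_eigenspace_eq_top {x : Matrix N N k} :
    IsSemisimpleMat x ↔ ⨆ μ, eigenspace (toLin' x) μ = ⊤ := by
  refine ⟨fun ⟨P, hP, hdiag⟩ => ?_, fun htop => ?_⟩
  · obtain ⟨d, hd⟩ : ∃ d, diagonal d = P * x * P⁻¹ := ⟨_, hdiag.diagonal_diag⟩
    have hx : x = P⁻¹ * diagonal d * P := by
      rw [hd, Matrix.mul_assoc, nonsing_inv_mul_cancel_right _ _ hP,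
        nonsing_inv_mul_cancel_left _ _ hP]
    rw [hx]
    exact iSup_eigenspace_mul_diagonal_mul_eq_top (mul_nonsing_inv _ hP) d
  · have hspan : ⊤ ≤ Submodule.span k {z | ∃ μ : k, x *ᵥ z = μ • z} := by
      rw [← htop]
      exact iSup_le fun μ z hz =>
        Submodule.subset_span ⟨μ, by simpa using mem_eigenspace_iff.1 hz⟩
    let B₀ := Module.Basis.ofSpan hspan
    let B := B₀.reindex (B₀.indexEquiv (Pi.basisFun k N))
    have hB (i : N) : ∃ μ : k, x *ᵥ B i = μ • B i := by
      rw [Module.Basis.reindex_apply]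
      exact Module.Basis.ofSpan_subset hspan ⟨_, rfl⟩
    choose d hd using hB
    let Q : Matrix N N k := (Pi.basisFun k N).toMatrix B
    have hQ : IsUnit Q.det :=
      isUnit_det_of_right_inverse (Module.Basis.toMatrix_mul_toMatrix_flip _ _)
    have hxQ : x * Q = Q * diagonal d := by
      ext i j
      rw [mul_diagonal, mul_comm]
      exact congrFun (hd j) i
    refine ⟨Q⁻¹, by simpa using hQ, ?_⟩
    rw [nonsing_inv_nonsing_inv _ hQ, Matrix.mul_assoc, hxQ, nonsing_inv_mul_cancel_left _ _ hQ]
    exact isDiag_diagonal d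

theorem isSemisimpleMat_mul_diagonal_mul {I : Type*} [Fintype I] [DecidableEq I]
    {U : Matrix N I k} {V : Matrix I N k} (hVU : V * U = 1) (d : I → k) :
    IsSemisimpleMat (U * diagonal d * V) :=
  isSemisimpleMat_iff_iSup_eigenspace_eq_top.2 (iSup_eigenspace_mul_diagonal_mul_eq_top hVU d)

theorem IsSemisimpleMat.maxGenEigenspace_eq_eigenspace {x : Matrix N N k}
    (hx : IsSemisimpleMat x) (μ : k) :
    maxGenEigenspace (toLin' x) μ = eigenspace (toLin' x) μ :=
  (congrFun (((independent_maxGenEigenspace (toLin' x)).le_iff_eq_of_iSup_eq_top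
    (isSemisimpleMat_iff_iSup_eigenspace_eq_top.1 hx)).1 fun μ =>
      (genEigenspace (toLin' x) μ).mono le_top) μ).symm

/-- `z` lies in the weight space of weight `χ` of the family of matrices `f`: every `f i` acts on
`z` as the scalar `χ i`. The vector `z` may be zero. -/
def HasWeight {ι : Type*} (f : ι → Matrix N N k) (χ : ι → k) (z : N → k) : Prop :=
  ∀ i, f i *ᵥ z = χ i • z

variable {ι : Type*} {f : ι → Matrix N N k}

theorem mem_iInf_maxGenEigenspace_iff_hasWeight (hss : ∀ i, IsSemisimpleMat (f i)) {χ : ι → k}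
    {z : N → k} : z ∈ ⨅ i, maxGenEigenspace (toLin' (f i)) (χ i) ↔ HasWeight f χ z := by
  simp only [Submodule.mem_iInf, (hss _).maxGenEigenspace_eq_eigenspace,
    mem_eigenspace_iff, toLin'_apply, HasWeight]

theorem commute_toLin' {x y : Matrix N N k} (hxy : Commute x y) :
    Commute (toLin' x) (toLin' y) :=
  hxy.map toLinAlgEquiv'

theorem span_hasWeight_eq_top (hcomm : ∀ i j, Commute (f i) (f j))
    (hss : ∀ i, IsSemisimpleMat (f i)) :
    Submodule.span k {z | ∃ χ, HasWeight f χ z} = ⊤ := by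
  have h := iSup_iInf_maxGenEigenspace_eq_top_of_iSup_maxGenEigenspace_eq_top_of_commute
    (fun i => toLin' (f i)) (fun i j _ => commute_toLin' (hcomm i j)) fun i => by
      simpa only [(hss i).maxGenEigenspace_eq_eigenspace] using
        isSemisimpleMat_iff_iSup_eigenspace_eq_top.1 (hss i)
  rw [eq_top_iff, ← h]
  exact iSup_le fun χ z hz =>
    Submodule.subset_span ⟨χ, (mem_iInf_maxGenEigenspace_iff_hasWeight hss).1 hz⟩

theorem finite_setOf_hasWeight (hcomm : ∀ i j, Commute (f i) (f j))
    (hss : ∀ i, IsSemisimpleMat (f i)) :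
    {χ | ∃ z, z ≠ 0 ∧ HasWeight f χ z}.Finite := by
  refine (Submodule.finite_ne_bot_of_iSupIndep
    (independent_iInf_maxGenEigenspace_of_forall_mapsTo (fun i => toLin' (f i))
      fun i j _ => mapsTo_maxGenEigenspace_of_comm
        (commute_toLin' (hcomm j i)) _)).subset ?_
  rintro χ ⟨z, hz, hχ⟩ hbot
  exact hz ((Submodule.eq_bot_iff _).1 hbot z
    ((mem_iInf_maxGenEigenspace_iff_hasWeight hss).2 hχ))

theorem IsSemisimpleMat.smul {x : Matrix N N k} (hx : IsSemisimpleMat x) (t : k) :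
    IsSemisimpleMat (t • x) := by
  obtain ⟨P, hP, hdiag⟩ := hx
  exact ⟨P, hP, by simpa only [Matrix.mul_smul, Matrix.smul_mul] using hdiag.smul t⟩

theorem IsSemisimpleMat.add {x y : Matrix N N k} (hx : IsSemisimpleMat x)
    (hy : IsSemisimpleMat y) (hxy : Commute x y) : IsSemisimpleMat (x + y) := by
  have hspan := span_hasWeight_eq_top (f := ![x, y])
    (by simp [Fin.forall_fin_two, hxy, hxy.symm]) (by simp [Fin.forall_fin_two, hx, hy])
  rw [isSemisimpleMat_iff_iSup_eigenspace_eq_top, eq_top_iff, ← hspan, Submodule.span_le]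
  rintro z ⟨χ, hχ⟩
  refine Submodule.mem_iSup_of_mem (χ 0 + χ 1) (mem_eigenspace_iff.2 ?_)
  rw [toLin'_apply, add_mulVec, add_smul]
  exact congrArg₂ (· + ·) (hχ 0) (hχ 1)

end Diagonalizable

section Monomial

variable {k : Type*} [Field k] {R : Type*} [Ring R] [Algebra k R] {ι : Type*} [Fintype ι]
  {b : ι → R}

theorem sum_smul_pow_mul_sum_smul (hb : Pairwise fun i j => b i * b j = 0) (f g : ι → k)
    (p : ℕ) :
    (∑ i, f i • b i) ^ p * ∑ i, g i • b i = ∑ i, (f i ^ p * g i) • b i ^ (p + 1) := by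
  induction p with
  | zero => simp
  | succ p ih =>
    rw [pow_succ', mul_assoc, ih, Finset.sum_mul]
    refine Finset.sum_congr rfl fun i _ => ?_
    rw [Finset.mul_sum, Finset.sum_eq_single i]
    · rw [smul_mul_smul_comm, ← pow_succ', pow_succ' (f i), mul_assoc]
    · intro j _ hji
      rw [smul_mul_smul_comm, pow_succ' (b j), ← mul_assoc (b i), hb hji.symm, zero_mul,
        smul_zero]
    · simp

theorem exists_perm_of_algHom_of_orthogonal {m : ℕ} (hm : m ≠ 0)
    (hb : Pairwise fun i j => b i * b j = 0) (hpow : ∀ i, b i ^ (m + 1) = b i)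
    (hli : LinearIndependent k b) {φ : R →ₐ[k] R} (hφ : Function.Injective φ)
    {w : Matrix ι ι k} (hw : ∀ j, φ (b j) = ∑ i, w i j • b i) :
    ∃ σ : Equiv.Perm ι, (∀ i j, i ≠ σ j → w i j = 0) ∧ ∀ j, w (σ j) j ^ m = 1 := by
  have expand (j l : ι) : φ (b j ^ m * b l) = ∑ i, (w i j ^ m * w i l) • b i := by
    rw [map_mul, map_pow, hw, hw, sum_smul_pow_mul_sum_smul hb]
    simp only [hpow]
  have off_diag {j l : ι} (hjl : j ≠ l) (i : ι) : w i j ^ m * w i l = 0 := by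
    refine Fintype.linearIndependent_iff.1 hli (fun i => w i j ^ m * w i l) ?_ i
    rw [← expand, ← Nat.succ_pred hm, pow_succ, mul_assoc, hb hjl, mul_zero, map_zero]
  have on_diag (i j : ι) : w i j ^ m * w i j = w i j := by
    refine hli.eq_coords_of_eq (f := fun i => w i j ^ m * w i j) (g := (w · j)) ?_ i
    rw [← expand, ← pow_succ, hpow, hw]
  have col_ne_zero (j : ι) : ∃ i, w i j ≠ 0 := by
    by_contra! hcol
    refine hli.ne_zero j (hφ ?_)
    simp only [hw, hcol, zero_smul, Finset.sum_const_zero, map_zero]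
  choose f hf using col_ne_zero
  have root (j : ι) : w (f j) j ^ m = 1 :=
    mul_right_cancel₀ (hf j) ((on_diag _ _).trans (one_mul _).symm)
  have zero_of_ne {j l : ι} (hjl : j ≠ l) : w (f j) l = 0 := by
    simpa only [root, one_mul] using off_diag hjl (f j)
  have hinj : Function.Injective f := fun j l hjl => by
    by_contra hne
    exact hf l (hjl ▸ zero_of_ne hne)
  refine ⟨Equiv.ofBijective f (Finite.injective_iff_bijective.1 hinj), fun i j hij => ?_, root⟩
  obtain ⟨l, rfl⟩ := (Finite.injective_iff_bijective.1 hinj).surjective i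
  exact zero_of_ne fun hlj => hij (congrArg f hlj)

end Monomial

section LittleWeylGroup

variable {k : Type*} [Field k] {N : Type*} [Fintype N] [DecidableEq N]

theorem exists_algEquiv_conj {h : Matrix N N k} (hh : IsUnit h.det) :
    ∃ φ : Matrix N N k ≃ₐ[k] Matrix N N k, ∀ x, φ x = h * x * h⁻¹ :=
  ⟨MulSemiringAction.toAlgEquiv k (Matrix N N k) (ConjAct.toConjAct (h.nonsingInvUnit hh)),
    fun _ => rfl⟩

theorem mem_littleWeylSet_iff {H : Set (Matrix N N k)} (hH : ∀ h ∈ H, IsUnit h.det)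
    {c : Submodule k (Matrix N N k)} {r : ℕ} {b : Fin r → Matrix N N k}
    (hb : Submodule.span k (Set.range b) = c) {w : Matrix (Fin r) (Fin r) k} :
    w ∈ littleWeylSet H c b ↔ ∃ h ∈ H, ∀ j, h * b j * h⁻¹ = ∑ i, w i j • b i := by
  refine ⟨fun ⟨h, hh, _, _, hw⟩ => ⟨h, hh, hw⟩, fun ⟨h, hh, hw⟩ => ?_⟩
  obtain ⟨φ, hφ⟩ := exists_algEquiv_conj (hH h hh)
  have map_le : c.map φ.toLinearMap ≤ c := by
    rw [← hb, Submodule.map_span_le, Set.forall_mem_range]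
    intro j
    rw [AlgEquiv.toLinearMap_apply, hφ, hw]
    exact sum_mem fun i _ => Submodule.smul_mem _ _ (Submodule.subset_span ⟨i, rfl⟩)
  have map_eq : c.map φ.toLinearMap = c :=
    Submodule.eq_of_le_of_finrank_eq map_le (φ.toLinearEquiv.finrank_map_eq c)
  refine ⟨h, hh, fun x hx => ?_, fun x hx => ?_, hw⟩
  · exact hφ x ▸ map_le ⟨x, hx, rfl⟩
  · obtain ⟨y, hy, rfl⟩ := map_eq.ge hx
    rw [AlgEquiv.toLinearMap_apply, hφ, Matrix.mul_assoc,
      nonsing_inv_mul_cancel_right _ _ (hH h hh), nonsing_inv_mul_cancel_left _ _ (hH h hh)]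
    exact hy

end LittleWeylGroup

section ClockShift

variable {k : Type*} [Field k] {m : ℕ} {l η : k}

/-- The twisted cyclic shift `e i ↦ e (i + 1)` of `k ^ m`, with `e (m - 1) ↦ l • e 0`: the matrix
of `v i ↦ v (i + 1)` for a sequence of vectors with `v (i + m) = l • v i`. -/
def shiftMatrix (l : k) (m : ℕ) : Matrix (Fin m) (Fin m) k :=
  (diagonal fun i : Fin m => if (i : ℕ) + 1 = m then l else 1).submatrix (finRotate m).symm id

/-- The clock matrix: the diagonal matrix with entries `1, η, …, η ^ (m - 1)`. -/
def clockMatrix (η : k) (m : ℕ) : Matrix (Fin m) (Fin m) k :=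
  diagonal fun i => η ^ (i : ℕ)

theorem pow_finRotate (hη : η ^ m = 1) (i : Fin m) :
    η ^ (finRotate m i : ℕ) = η ^ ((i : ℕ) + 1) := by
  obtain ⟨n, rfl⟩ : ∃ n, m = n + 1 := ⟨m - 1, by have := i.pos; omega⟩
  obtain rfl | hi := eq_or_ne i (Fin.last n)
  · rw [finRotate_last, Fin.val_zero, pow_zero, Fin.val_last, hη]
  · rw [coe_finRotate_of_ne_last hi]

theorem shiftMatrix_apply (i j : Fin m) :
    shiftMatrix l m i j =
      if i = finRotate m j then (if (j : ℕ) + 1 = m then l else 1) else 0 := by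
  rw [shiftMatrix, submatrix_apply, id]
  obtain rfl | hij := eq_or_ne i (finRotate m j)
  · rw [Equiv.symm_apply_apply, diagonal_apply_eq, if_pos rfl]
  · rw [diagonal_apply_ne _ (mt (Equiv.symm_apply_eq _).1 hij), if_neg hij]

theorem shiftMatrix_transpose_mul_self (hl : l ^ 2 = 1) :
    (shiftMatrix l m)ᵀ * shiftMatrix l m = 1 := by
  rw [shiftMatrix, transpose_submatrix, submatrix_mul_equiv, diagonal_transpose,
    diagonal_mul_diagonal, submatrix_id_id, diagonal_eq_one]
  ext i
  split_ifs
  · rw [← sq, hl, Pi.one_apply]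
  · exact one_mul 1

theorem det_shiftMatrix (hm : Even m) (hm0 : m ≠ 0) : (shiftMatrix l m).det = -l := by
  obtain ⟨n, rfl⟩ := Nat.exists_eq_succ_of_ne_zero hm0
  have hn : Odd n := by simpa [Nat.even_add_one] using hm
  rw [shiftMatrix, det_permute, Equiv.Perm.sign_symm, sign_finRotate, Nat.succ_sub_one,
    hn.neg_one_pow, det_diagonal, Fin.prod_univ_castSucc]
  simp [Fin.val_castSucc, (Fin.is_lt _).ne]

theorem clockMatrix_mul_shiftMatrix (hη : η ^ m = 1) :
    clockMatrix η m * shiftMatrix l m = η • (shiftMatrix l m * clockMatrix η m) := by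
  ext i j
  simp only [clockMatrix, diagonal_mul, mul_diagonal, Matrix.smul_apply, shiftMatrix_apply,
    smul_eq_mul]
  by_cases hij : i = finRotate m j
  · rw [hij, pow_finRotate hη, pow_succ]
    ring
  · simp only [hij, if_false, mul_zero, zero_mul]

theorem clockMatrix_mul_shiftMatrix_pow (hη : η ^ m = 1) (a : ℕ) :
    clockMatrix η m * shiftMatrix l m ^ a = η ^ a • (shiftMatrix l m ^ a * clockMatrix η m) := by
  induction a with
  | zero => simp
  | succ a ih =>
    rw [pow_succ, ← Matrix.mul_assoc, ih, Matrix.smul_mul, Matrix.mul_assoc,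
      clockMatrix_mul_shiftMatrix hη, Matrix.mul_smul, smul_smul, Matrix.mul_assoc, pow_succ]

end ClockShift

section BlockMonomial

variable {k : Type*} [Field k] {m : ℕ} {l η : k} {ι : Type*} [DecidableEq ι]

/-- Block diagonal matrix of clock matrices: the `j`-th block is `t j` times the clock matrix.
The index `(i, j)` is the `i`-th basis vector of the `j`-th block. -/
def blockClock (η : k) (m : ℕ) (t : ι → k) : Matrix (Fin m × ι) (Fin m × ι) k :=
  blockDiagonal fun j => t j • clockMatrix η m

/-- Block diagonal matrix of twisted shifts, one block for each element of `ι`. -/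
def blockShift (l : k) (m : ℕ) (ι : Type*) [DecidableEq ι] : Matrix (Fin m × ι) (Fin m × ι) k :=
  blockDiagonal fun _ => shiftMatrix l m

/-- Block monomial matrix: it maps the `j`-th block to the block `σ j`, through `Y j`. -/
def blockMonomial (σ : Equiv.Perm ι) (Y : ι → Matrix (Fin m) (Fin m) k) :
    Matrix (Fin m × ι) (Fin m × ι) k :=
  (blockDiagonal Y).submatrix (Equiv.prodCongrRight fun _ : Fin m => σ.symm) id

theorem blockClock_eq_diagonal (t : ι → k) :
    blockClock η m t = diagonal fun p => t p.2 * η ^ (p.1 : ℕ) := by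
  simp only [blockClock, clockMatrix, ← diagonal_smul, blockDiagonal_diagonal]
  rfl

theorem blockClock_injective [NeZero m] :
    Function.Injective (blockClock η m : (ι → k) → Matrix (Fin m × ι) (Fin m × ι) k) :=
  fun t t' h => funext fun j => by
    simpa [blockClock_eq_diagonal] using congrFun (congrFun h (0, j)) (0, j)

variable [Fintype ι]

theorem commute_blockClock (t t' : ι → k) : Commute (blockClock η m t) (blockClock η m t') := by
  rw [blockClock_eq_diagonal, blockClock_eq_diagonal]
  exact commute_diagonal _ _

theorem mul_blockClock_mul_eq_sum {N : Type*} (U : Matrix N (Fin m × ι) k)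
    (V : Matrix (Fin m × ι) N k) (t : ι → k) :
    U * blockClock η m t * V = ∑ j, t j • (U * blockClock η m (Pi.single j 1) * V) := by
  have ht : blockClock η m t = ∑ j, t j • blockClock η m (Pi.single j 1) := by
    ext p q
    simp [blockClock_eq_diagonal, Matrix.sum_apply, diagonal_apply, Pi.single_apply]
  simp only [ht, Matrix.mul_sum, Matrix.sum_mul, Matrix.mul_smul, Matrix.smul_mul]

theorem blockShift_transpose_mul_self (hl : l ^ 2 = 1) :
    (blockShift l m ι)ᵀ * blockShift l m ι = 1 := by
  rw [blockShift, blockDiagonal_transpose, ← blockDiagonal_mul]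
  simp only [shiftMatrix_transpose_mul_self hl]
  exact blockDiagonal_one

theorem isAdjointPair_blockClock (hη : η ^ m = 1) (t : ι → k) :
    IsAdjointPair (blockShift l m ι)ᵀ (blockShift l m ι)ᵀ (η • blockClock η m t)
      (blockClock η m t) := by
  have h : η • (blockShift l m ι * blockClock η m t) = blockClock η m t * blockShift l m ι := by
    rw [blockShift, blockClock, ← blockDiagonal_mul, ← blockDiagonal_mul, ← blockDiagonal_smul]
    congr 1
    ext1 j
    rw [Pi.smul_apply, Matrix.smul_mul, clockMatrix_mul_shiftMatrix hη, Matrix.mul_smul, smul_comm]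
  have hT := congrArg transpose h
  rw [transpose_smul, transpose_mul, transpose_mul] at hT
  rw [IsAdjointPair, transpose_smul, Matrix.smul_mul, hT, blockClock_eq_diagonal,
    diagonal_transpose]

variable {N : Type*} [Fintype N] {U : Matrix N (Fin m × ι) k} {V : Matrix (Fin m × ι) N k}

theorem mul_blockClock_mul_injective [NeZero m] (hVU : V * U = 1) :
    Function.Injective fun t : ι → k => U * blockClock η m t * V := by
  have h (B : Matrix (Fin m × ι) (Fin m × ι) k) : V * (U * B * V) * U = B := by
    rw [Matrix.mul_assoc, Matrix.mul_assoc _ V, hVU, Matrix.mul_one, ← Matrix.mul_assoc, hVU,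
      Matrix.one_mul]
  exact (Function.LeftInverse.injective (g := fun X => V * X * U) h).comp blockClock_injective

theorem linearIndependent_mul_blockClock_mul [NeZero m] (hVU : V * U = 1) :
    LinearIndependent k fun j : ι => U * blockClock η m (Pi.single j 1) * V := by
  refine Fintype.linearIndependent_iff.2 fun t ht => congrFun
    (mul_blockClock_mul_injective (η := η) hVU (a₁ := t) (a₂ := 0) ?_)
  simp only [mul_blockClock_mul_eq_sum U V t, mul_blockClock_mul_eq_sum U V 0, ht, Pi.zero_apply,
    zero_smul, Finset.sum_const_zero]

variable {σ : Equiv.Perm ι} {Y : ι → Matrix (Fin m) (Fin m) k}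

theorem blockDiagonal_mul_blockMonomial (Z : ι → Matrix (Fin m) (Fin m) k) :
    blockDiagonal Z * blockMonomial σ Y = blockMonomial σ fun j => Z (σ j) * Y j := by
  have hZ : blockDiagonal Z = (blockDiagonal fun j => Z (σ j)).submatrix
      (Equiv.prodCongrRight fun _ : Fin m => σ.symm)
      (Equiv.prodCongrRight fun _ : Fin m => σ.symm) := by
    ext ⟨i, j⟩ ⟨i', j'⟩
    simp [blockDiagonal_apply]
  rw [hZ, blockMonomial, submatrix_mul_equiv, ← blockDiagonal_mul, blockMonomial]

theorem blockMonomial_mul_blockDiagonal (Z : ι → Matrix (Fin m) (Fin m) k) :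
    blockMonomial σ Y * blockDiagonal Z = blockMonomial σ fun j => Y j * Z j := by
  rw [blockMonomial, ← submatrix_id_id (blockDiagonal Z), ← Equiv.coe_refl, submatrix_mul_equiv,
    ← blockDiagonal_mul, blockMonomial, Equiv.coe_refl]

theorem blockMonomial_transpose_mul_self (hY : ∀ j, (Y j)ᵀ * Y j = 1) :
    (blockMonomial σ Y)ᵀ * blockMonomial σ Y = 1 := by
  rw [blockMonomial, transpose_submatrix, submatrix_mul_equiv, blockDiagonal_transpose,
    ← blockDiagonal_mul, submatrix_id_id]
  simp only [hY]
  exact blockDiagonal_one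

theorem blockMonomial_isometry (hY : ∀ j, (Y j)ᵀ * Y j = 1)
    (hYT : ∀ j, Commute (shiftMatrix l m) (Y j)) :
    (blockMonomial σ Y)ᵀ * (blockShift l m ι)ᵀ * blockMonomial σ Y = (blockShift l m ι)ᵀ := by
  have hcomm : blockShift l m ι * blockMonomial σ Y = blockMonomial σ Y * blockShift l m ι := by
    rw [blockShift, blockDiagonal_mul_blockMonomial, blockMonomial_mul_blockDiagonal]
    simp only [(hYT _).eq]
  rw [← transpose_mul, hcomm, transpose_mul, Matrix.mul_assoc,
    blockMonomial_transpose_mul_self hY, Matrix.mul_one]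

theorem det_blockMonomial (hm : Even m) : (blockMonomial σ Y).det = ∏ j, (Y j).det := by
  rw [blockMonomial, det_permute, Equiv.Perm.sign_prodCongrRight, Finset.prod_const,
    Finset.card_univ, Fintype.card_fin, Equiv.Perm.sign_symm, det_blockDiagonal]
  obtain ⟨p, rfl⟩ := hm
  rw [pow_add, ← mul_pow, Int.units_mul_self, one_pow, Units.val_one, Int.cast_one, one_mul]

theorem blockClock_single_mul_blockMonomial (hη : η ^ m = 1) (a : ι → ℕ) (j : ι) :
    blockClock η m (Pi.single (σ j) 1) * blockMonomial σ (fun i => shiftMatrix l m ^ a i) =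
      η ^ a j • (blockMonomial σ (fun i => shiftMatrix l m ^ a i) *
        blockClock η m (Pi.single j 1)) := by
  have hsmul (c : k) (Z : ι → Matrix (Fin m) (Fin m) k) :
      c • blockMonomial σ Z = blockMonomial σ (c • Z) := by
    rw [blockMonomial, blockMonomial, blockDiagonal_smul]; rfl
  rw [blockClock, blockClock, blockDiagonal_mul_blockMonomial, blockMonomial_mul_blockDiagonal,
    hsmul]
  congr 1
  ext1 i
  obtain rfl | hij := eq_or_ne i j
  · simp [clockMatrix_mul_shiftMatrix_pow hη]
  · simp [hij]

end BlockMonomial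

section BlockIsometry

variable {k : Type*} [Field k] {m : ℕ} {l η : k} {ι : Type*} [Fintype ι] [DecidableEq ι]

theorem exists_isometry_of_perm (hm : Even m) (hm0 : m ≠ 0) (hl : l ^ 2 = 1) (hη : η ^ m = 1)
    (σ : Equiv.Perm ι) (a : ι → ℕ) :
    ∃ M : Matrix (Fin m × ι) (Fin m × ι) k,
      Mᵀ * (blockShift l m ι)ᵀ * M = (blockShift l m ι)ᵀ ∧ M.det = (-l) ^ ∑ j, a j ∧
        ∀ j, blockClock η m (Pi.single (σ j) 1) * M =
          η ^ a j • (M * blockClock η m (Pi.single j 1)) := by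
  refine ⟨blockMonomial σ fun j => shiftMatrix l m ^ a j, blockMonomial_isometry (fun j => ?_)
    fun j => (Commute.refl _).pow_right _, ?_, blockClock_single_mul_blockMonomial hη a⟩
  · have hT := shiftMatrix_transpose_mul_self (m := m) hl
    rw [transpose_pow, ← Commute.mul_pow, hT, one_pow]
    exact hT.trans (mul_eq_one_comm.1 hT).symm
  · simp only [det_blockMonomial hm, det_pow, det_shiftMatrix hm hm0, Finset.prod_pow_eq_pow_sum]

theorem prod_eq_one_of_mul_finRotate_eq_one {M : Type*} [CommMonoid M] (hm : Even m)
    {t : Fin m → M} (ht : ∀ i, t i * t (finRotate m i) = 1) : ∏ i, t i = 1 := by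
  obtain ⟨p, rfl⟩ := even_iff_exists_two_mul.1 hm
  rw [← (finCongr (mul_comm p 2)).prod_comp, ← finProdFinEquiv.prod_comp, Fintype.prod_prod_type]
  refine Finset.prod_eq_one fun i _ => ?_
  have hrot : finRotate (2 * p) (finCongr (mul_comm p 2) (finProdFinEquiv (i, 0))) =
      finCongr (mul_comm p 2) (finProdFinEquiv (i, 1)) := by
    have : NeZero (2 * p) := ⟨by have := i.pos; omega⟩
    rw [finRotate_apply]
    refine Fin.ext ?_
    have := i.is_lt
    rw [Fin.val_add_one_of_lt' (by simp; omega)]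
    simp [add_comm]
  rw [Fin.prod_univ_two, ← hrot, ht]

theorem isDiag_of_commute_blockClock (hη : IsPrimitiveRoot η m)
    {X : Matrix (Fin m × ι) (Fin m × ι) k}
    (hX : ∀ j, Commute X (blockClock η m (Pi.single j 1))) : X.IsDiag := by
  rintro ⟨i, j⟩ ⟨i', j'⟩ hne
  have hentry := congrFun₂ (hX j').eq (i, j) (i', j')
  rw [blockClock_eq_diagonal, mul_diagonal, diagonal_mul, Pi.single_eq_same, one_mul,
    mul_comm] at hentry
  refine (mul_eq_mul_right_iff.1 hentry).resolve_left fun hpow => ?_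
  obtain rfl | hj := eq_or_ne j j'
  · rw [Pi.single_eq_same, one_mul] at hpow
    exact hne (Prod.ext (Fin.ext (hη.pow_inj i'.is_lt i.is_lt hpow).symm) rfl)
  · rw [Pi.single_eq_of_ne hj, zero_mul] at hpow
    exact pow_ne_zero _ (hη.ne_zero (Fin.pos i).ne') hpow

theorem det_eq_one_of_commute_blockClock (hm : Even m) (hl : l ≠ 0) (hη : IsPrimitiveRoot η m)
    {X : Matrix (Fin m × ι) (Fin m × ι) k}
    (hX : ∀ j, Commute X (blockClock η m (Pi.single j 1)))
    (hiso : Xᵀ * (blockShift l m ι)ᵀ * X = (blockShift l m ι)ᵀ) : X.det = 1 := by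
  obtain ⟨t, rfl⟩ : ∃ t, diagonal t = X := ⟨_, (isDiag_of_commute_blockClock hη hX).diagonal_diag⟩
  have ht (i : Fin m) (j : ι) : t (i, j) * t (finRotate m i, j) = 1 := by
    have hentry := congrFun₂ hiso (i, j) (finRotate m i, j)
    rw [diagonal_transpose, mul_diagonal, diagonal_mul, transpose_apply, blockShift,
      blockDiagonal_apply_eq, shiftMatrix_apply, if_pos rfl, mul_right_comm] at hentry
    refine mul_right_cancel₀ ?_ (hentry.trans (one_mul _).symm)
    split_ifs
    exacts [hl, one_ne_zero]
  rw [det_diagonal, Fintype.prod_prod_type_right]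
  exact Finset.prod_eq_one fun j _ => prod_eq_one_of_mul_finRotate_eq_one hm fun i => ht i j

end BlockIsometry

section Frame

variable {k : Type*} [Field k] {N I : Type*} [Fintype N] [Fintype I]
  [DecidableEq I] {S : Matrix N N k} {Q : Matrix I I k} {U : Matrix N I k} {V : Matrix I N k}

/-- The columns of `U` are linearly independent, with Gram matrix `Q` for the (not necessarily
symmetric) bilinear form `S`, and their span has a complement that is orthogonal to it on both
sides; the rows of `V` are the coordinates of the projection along this complement. -/
structure IsFrame (S : Matrix N N k) (Q : Matrix I I k) (U : Matrix N I k) (V : Matrix I N k) :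
    Prop where
  coord_mul : V * U = 1
  transpose_mul_form : Uᵀ * S = Q * V
  form_mul : S * U = Vᵀ * Q

theorem isFrame_of_gram {A : Matrix N N k} (hSA : S * A = Sᵀ) {T : Matrix I I k}
    (hT : Tᵀ * T = 1) (hAU : A * U = U * T * T) (hgram : Uᵀ * S * U * T = 1) :
    IsFrame S Tᵀ U (T * Uᵀ * S) where
  coord_mul := by
    rw [Matrix.mul_assoc, Matrix.mul_assoc, ← Matrix.mul_assoc Uᵀ]
    exact mul_eq_one_comm.1 hgram
  transpose_mul_form := by
    rw [Matrix.mul_assoc, ← Matrix.mul_assoc Tᵀ, hT, Matrix.one_mul]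
  form_mul := by
    have hT' : T * Tᵀ = 1 := mul_eq_one_comm.1 hT
    calc S * U = S * U * T * (T * Tᵀ) * Tᵀ := by
          rw [hT', Matrix.mul_one, Matrix.mul_assoc (S * U), hT', Matrix.mul_one]
      _ = S * (U * T * T) * Tᵀ * Tᵀ := by simp only [Matrix.mul_assoc]
      _ = (T * Uᵀ * S)ᵀ * Tᵀ := by
          rw [← hAU, ← Matrix.mul_assoc S, hSA]
          simp only [transpose_mul, transpose_transpose, Matrix.mul_assoc]

namespace IsFrame

theorem isAdjointPair (hF : IsFrame S Q U V) {X Y : Matrix I I k} (h : IsAdjointPair Q Q X Y) :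
    IsAdjointPair S S (U * X * V) (U * Y * V) :=
  calc (U * X * V)ᵀ * S = Vᵀ * Xᵀ * (Uᵀ * S) := by
        simp only [transpose_mul, Matrix.mul_assoc]
    _ = Vᵀ * (Xᵀ * Q) * V := by rw [hF.transpose_mul_form]; simp only [Matrix.mul_assoc]
    _ = Vᵀ * Q * Y * V := by rw [show Xᵀ * Q = Q * Y from h]; simp only [Matrix.mul_assoc]
    _ = S * (U * Y * V) := by rw [← hF.form_mul]; simp only [Matrix.mul_assoc]

theorem coord_mul_of_isAdjointPair (hF : IsFrame S Q U V) {R : Matrix I I k} (hRQ : R * Q = 1)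
    {x y : Matrix N N k} {X Y : Matrix I I k} (hxy : IsAdjointPair S S x y)
    (hXY : IsAdjointPair Q Q X Y) (hxU : x * U = U * X) : V * y = Y * V := by
  have h : Q * (V * y) = Q * (Y * V) :=
    calc Q * (V * y) = Uᵀ * (S * y) := by
          rw [← Matrix.mul_assoc, ← hF.transpose_mul_form, Matrix.mul_assoc]
      _ = (x * U)ᵀ * S := by rw [← show xᵀ * S = S * y from hxy, transpose_mul, Matrix.mul_assoc]
      _ = Xᵀ * Q * V := by
          rw [hxU, transpose_mul, Matrix.mul_assoc, hF.transpose_mul_form, Matrix.mul_assoc]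
      _ = Q * (Y * V) := by rw [show Xᵀ * Q = Q * Y from hXY, Matrix.mul_assoc]
  simpa only [← Matrix.mul_assoc, hRQ, Matrix.one_mul] using congrArg (R * ·) h

variable [DecidableEq N]

theorem exists_isometry (hF : IsFrame S Q U V) {M : Matrix I I k} (hM : Mᵀ * Q * M = Q) :
    ∃ h : Matrix N N k, hᵀ * S * h = S ∧ h.det = M.det ∧ h * U = U * M ∧ V * h = M * V := by
  refine ⟨1 + U * (M - 1) * V, ?_, ?_, ?_, ?_⟩
  · have hSh : S * (1 + U * (M - 1) * V) = S + Vᵀ * (Q * (M - 1) * V) := by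
      rw [Matrix.mul_add, Matrix.mul_one, ← Matrix.mul_assoc, ← Matrix.mul_assoc, hF.form_mul]
      simp only [Matrix.mul_assoc]
    have hUV : Uᵀ * Vᵀ = 1 := by rw [← transpose_mul, hF.coord_mul, transpose_one]
    have hUSh : Uᵀ * (S * (1 + U * (M - 1) * V)) = Q * M * V := by
      rw [hSh, Matrix.mul_add, hF.transpose_mul_form, ← Matrix.mul_assoc Uᵀ, hUV, Matrix.one_mul,
        ← Matrix.add_mul, ← mul_one_add, add_sub_cancel]
    calc (1 + U * (M - 1) * V)ᵀ * S * (1 + U * (M - 1) * V)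
        = S * (1 + U * (M - 1) * V) + Vᵀ * ((M - 1)ᵀ * (Uᵀ * (S * (1 + U * (M - 1) * V)))) := by
          rw [transpose_add, transpose_one, Matrix.mul_assoc, Matrix.add_mul, Matrix.one_mul,
            transpose_mul, transpose_mul]
          simp only [Matrix.mul_assoc]
      _ = S + Vᵀ * ((Mᵀ * Q * M - Q) * V) := by
          rw [hUSh, hSh, add_assoc, ← Matrix.mul_add, ← Matrix.mul_assoc, ← Matrix.add_mul,
            transpose_sub, transpose_one]
          congr 3
          noncomm_ring
      _ = S := by rw [hM, sub_self, Matrix.zero_mul, Matrix.mul_zero, add_zero]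
  · rw [Matrix.mul_assoc, det_one_add_mul_comm, Matrix.mul_assoc, hF.coord_mul, Matrix.mul_one,
      add_sub_cancel]
  · rw [Matrix.add_mul, Matrix.one_mul, Matrix.mul_assoc, hF.coord_mul, Matrix.mul_one,
      Matrix.mul_sub, Matrix.mul_one, add_sub_cancel]
  · rw [Matrix.mul_add, Matrix.mul_one, ← Matrix.mul_assoc, ← Matrix.mul_assoc, hF.coord_mul,
      Matrix.one_mul, Matrix.sub_mul, Matrix.one_mul, add_sub_cancel]

theorem restrict_isometry (hF : IsFrame S Q U V) (hUV : U * V = 1) {x : Matrix N N k}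
    (hx : xᵀ * S * x = S) : (V * x * U)ᵀ * Q * (V * x * U) = Q :=
  calc (V * x * U)ᵀ * Q * (V * x * U) = Uᵀ * xᵀ * (Vᵀ * Q) * V * x * U := by
        simp only [transpose_mul, Matrix.mul_assoc]
    _ = Uᵀ * (xᵀ * S * x) * U := by
        rw [← hF.form_mul]
        simp only [Matrix.mul_assoc]
        rw [← Matrix.mul_assoc U, hUV, Matrix.one_mul]
    _ = Q := by
        rw [hx, hF.transpose_mul_form, Matrix.mul_assoc, hF.coord_mul, Matrix.mul_one]

end IsFrame

end Frame

section SeqMatrix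

variable {k : Type*} [Field k] {N J : Type*} {m : ℕ}

/-- The matrix whose columns are the first `m` terms of each of the sequences `v j`; the column
`(i, j)` is `v j i`. -/
def seqMatrix (m : ℕ) (v : J → ℕ → N → k) : Matrix N (Fin m × J) k :=
  of fun a p => v p.2 p.1 a

theorem seqMatrix_mul_blockShift [Fintype J] [DecidableEq J] {l : k}
    {v : J → ℕ → N → k} (hv : ∀ j i, v j (i + m) = l • v j i) :
    seqMatrix m v * blockShift l m J = seqMatrix m fun j i => v j (i + 1) := by
  ext a ⟨i, j⟩
  have h : v j (finRotate m i) a * (if (i : ℕ) + 1 = m then l else 1) = v j (i + 1) a := by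
    obtain ⟨n, rfl⟩ : ∃ n, m = n + 1 := ⟨m - 1, by have := i.pos; omega⟩
    obtain rfl | hi := eq_or_ne i (Fin.last n)
    · have := congrFun (hv j 0) a
      rw [zero_add, Pi.smul_apply, smul_eq_mul] at this
      rw [finRotate_last, Fin.val_zero, Fin.val_last, if_pos rfl, this, mul_comm]
    · rw [coe_finRotate_of_ne_last hi, if_neg, mul_one]
      exact fun h => hi (Fin.ext (Nat.succ_injective h))
  simpa [seqMatrix, Matrix.mul_apply, Fintype.sum_prod_type, blockShift, blockDiagonal_apply,
    shiftMatrix_apply] using h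

end SeqMatrix

section Strings

variable {k : Type*} [Field k] {N : Type*} [Fintype N] {S A : Matrix N N k} {η : k}

theorem eigenvalue_eq_of_isAdjointPair {x y : Matrix N N k} (hxy : IsAdjointPair S S x y)
    {a b : k} {z w : N → k} (hz : x *ᵥ z = a • z) (hw : y *ᵥ w = b • w)
    (hzw : z ⬝ᵥ S *ᵥ w ≠ 0) : a = b := by
  refine mul_right_cancel₀ hzw ?_
  calc a * (z ⬝ᵥ S *ᵥ w) = (x *ᵥ z) ⬝ᵥ S *ᵥ w := by rw [hz, smul_dotProduct, smul_eq_mul]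
    _ = z ⬝ᵥ S *ᵥ (y *ᵥ w) := by
        rw [← vecMul_transpose, ← dotProduct_mulVec, mulVec_mulVec, mulVec_mulVec,
          show xᵀ * S = S * y from hxy]
    _ = b * (z ⬝ᵥ S *ᵥ w) := by rw [hw, mulVec_smul, dotProduct_smul, smul_eq_mul]

theorem dotProduct_mulVec_mulVec_of_mul_eq_transpose (hSA : S * A = Sᵀ) (z w : N → k) :
    z ⬝ᵥ S *ᵥ (A *ᵥ w) = w ⬝ᵥ S *ᵥ z := by
  rw [mulVec_mulVec, hSA, mulVec_transpose, dotProduct_comm, dotProduct_mulVec]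

variable {ι : Type*} {f : ι → Matrix N N k} {χ ψ : ι → k} {z w : N → k}

theorem HasWeight.smul (hz : HasWeight f χ z) (t : k) : HasWeight f χ (t • z) := fun i => by
  rw [mulVec_smul, hz, smul_comm]

theorem HasWeight.eq_smul_of_dotProduct_ne_zero
    (hf : ∀ i, IsAdjointPair S S (η • f i) (f i)) (hz : HasWeight f χ z) (hw : HasWeight f ψ w)
    (hzw : z ⬝ᵥ S *ᵥ w ≠ 0) : ψ = η • χ :=
  funext fun i => (eigenvalue_eq_of_isAdjointPair (hf i)
    (by rw [smul_mulVec, hz, smul_smul, Pi.smul_apply, smul_eq_mul]) (hw i) hzw).symm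

/-- A string of weight vectors for the family `f` through the weight `χ`: consecutive vectors pair
to `1` under the bilinear form `S`, and `A` (which is `S⁻¹ * Sᵀ` in the application) moves two steps
along the string. -/
structure IsWeightString (S A : Matrix N N k) (η : k) (f : ι → Matrix N N k) (χ : ι → k)
    (v : ℕ → N → k) : Prop where
  hasWeight : ∀ i, HasWeight f (η ^ i • χ) (v i)
  dotProduct_succ : ∀ i, v i ⬝ᵥ S *ᵥ v (i + 1) = 1
  mulVec_eq : ∀ i, A *ᵥ v i = v (i + 2)

theorem IsWeightString.eq_smul_of_dotProduct_ne_zero (hη : η ≠ 0)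
    (hf : ∀ i, IsAdjointPair S S (η • f i) (f i)) {v u : ℕ → N → k}
    (hv : IsWeightString S A η f χ v) (hu : IsWeightString S A η f ψ u) {i j : ℕ}
    (h : v i ⬝ᵥ S *ᵥ u (j + 1) ≠ 0) : η ^ j • ψ = η ^ i • χ := by
  have h := (hv.hasWeight i).eq_smul_of_dotProduct_ne_zero hf (hu.hasWeight (j + 1)) h
  rw [pow_succ', mul_smul] at h
  exact smul_right_injective _ hη h

theorem IsWeightString.mul_seqMatrix {J : Type*} [DecidableEq J] [Fintype J] {m : ℕ}
    {χ : J → ι → k} {v : J → ℕ → N → k} (hv : ∀ j, IsWeightString S A η f (χ j) (v j)) (i : ι) :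
    f i * seqMatrix m v = seqMatrix m v * blockClock η m (χ · i) := by
  ext a q
  rw [blockClock_eq_diagonal, mul_diagonal, mul_comm, mul_comm (χ q.2 i)]
  exact congrFun ((hv q.2).hasWeight q.1 i) a

variable [DecidableEq N]

theorem mul_eq_sq_smul_mul_of_isAdjointPair (hS : IsUnit S.det) (hSA : S * A = Sᵀ)
    {x : Matrix N N k} (hx : IsAdjointPair S S (η • x) x) : x * A = η ^ 2 • (A * x) := by
  have hxS : η • (xᵀ * S) = S * x := by
    rw [← show (η • x)ᵀ * S = S * x from hx, transpose_smul, Matrix.smul_mul]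
  have h : S * (x * A) = S * (η ^ 2 • (A * x)) :=
    calc S * (x * A) = η • (xᵀ * Sᵀ) := by
          rw [← Matrix.mul_assoc, ← hxS, Matrix.smul_mul, Matrix.mul_assoc, hSA]
      _ = S * (η ^ 2 • (A * x)) := by
          rw [← transpose_mul, ← hxS, transpose_smul, transpose_mul, transpose_transpose, ← hSA,
            smul_smul, ← sq, Matrix.mul_smul, Matrix.mul_assoc]
  simpa only [nonsing_inv_mul_cancel_left _ _ hS] using congrArg (S⁻¹ * ·) h

theorem HasWeight.exists_dotProduct_eq_one (hS : IsUnit S.det)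
    (hf : ∀ i, IsAdjointPair S S (η • f i) (f i))
    (hspan : Submodule.span k {z | ∃ χ, HasWeight f χ z} = ⊤) (hz : HasWeight f χ z)
    (hz0 : z ≠ 0) : ∃ w, HasWeight f (η • χ) w ∧ z ⬝ᵥ S *ᵥ w = 1 := by
  obtain ⟨w, ⟨ψ, hw⟩, hzw⟩ : ∃ w, (∃ ψ, HasWeight f ψ w) ∧ z ⬝ᵥ S *ᵥ w ≠ 0 := by
    by_contra! hcon
    have hzS : dotProductEquiv k N (z ᵥ* S) = 0 :=
      LinearMap.ext_on hspan fun w hw => (dotProduct_mulVec z S w).symm.trans (hcon w hw)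
    rw [LinearEquiv.map_eq_zero_iff] at hzS
    exact hz0 (vecMul_injective_of_isUnit ((isUnit_iff_isUnit_det S).2 hS)
      (hzS.trans (zero_vecMul S).symm))
  obtain rfl := hz.eq_smul_of_dotProduct_ne_zero hf hw hzw
  refine ⟨(z ⬝ᵥ S *ᵥ w)⁻¹ • w, hw.smul _, ?_⟩
  rw [mulVec_smul, dotProduct_smul, smul_eq_mul, inv_mul_cancel₀ hzw]

theorem HasWeight.exists_isWeightString (hS : IsUnit S.det) (hSA : S * A = Sᵀ)
    (hf : ∀ i, IsAdjointPair S S (η • f i) (f i))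
    (hspan : Submodule.span k {z | ∃ χ, HasWeight f χ z} = ⊤) (hz : HasWeight f χ z)
    (hz0 : z ≠ 0) : ∃ v, IsWeightString S A η f χ v := by
  obtain ⟨w, hw, hzw⟩ := hz.exists_dotProduct_eq_one hS hf hspan hz0
  let next (p : (N → k) × (N → k)) : (N → k) × (N → k) := (p.2, A *ᵥ p.1)
  have invariant (i : ℕ) : HasWeight f (η ^ i • χ) (next^[i] (z, w)).1 ∧
      HasWeight f (η ^ (i + 1) • χ) (next^[i] (z, w)).2 ∧
      (next^[i] (z, w)).1 ⬝ᵥ S *ᵥ (next^[i] (z, w)).2 = 1 := by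
    induction i with
    | zero => simpa only [pow_zero, one_smul, zero_add, pow_one] using ⟨hz, hw, hzw⟩
    | succ i ih =>
      obtain ⟨h₁, h₂, h₃⟩ := ih
      rw [Function.iterate_succ_apply']
      refine ⟨h₂, fun j => ?_, (dotProduct_mulVec_mulVec_of_mul_eq_transpose hSA _ _).trans h₃⟩
      rw [mulVec_mulVec, mul_eq_sq_smul_mul_of_isAdjointPair hS hSA (hf j), smul_mulVec,
        ← mulVec_mulVec, h₁ j, mulVec_smul, smul_smul]
      simp only [Pi.smul_apply, smul_eq_mul]
      rw [← mul_assoc, ← pow_add, add_comm 2]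
  refine ⟨fun i => (next^[i] (z, w)).1, fun i => (invariant i).1, fun i => ?_, fun i => ?_⟩
  · rw [Function.iterate_succ_apply']
    exact (invariant i).2.2
  · rw [Function.iterate_succ_apply', Function.iterate_succ_apply']

theorem IsWeightString.apply_add {v : ℕ → N → k} (hv : IsWeightString S A η f χ v) {p : ℕ}
    {l : k} (hA : A ^ p = l • 1) (i : ℕ) : v (i + 2 * p) = l • v i := by
  have h (q : ℕ) : v (i + 2 * q) = A ^ q *ᵥ v i := by
    induction q with
    | zero => simp
    | succ q ih => rw [pow_succ', ← mulVec_mulVec, ← ih, hv.mulVec_eq]; rfl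
  rw [h, hA, smul_mulVec, one_mulVec]

end Strings

section CartanSubspace

theorem exists_fin_transversal {α : Type*} (r : Setoid α) {W : Set α} (hW : W.Finite) :
    ∃ (s : ℕ) (χ : Fin s → α), (∀ j, χ j ∈ W) ∧ (Pairwise fun i j => ¬ r (χ i) (χ j)) ∧
      ∀ ψ ∈ W, ∃ j, r ψ (χ j) := by
  have := (hW.image (Quotient.mk r)).to_subtype
  let e := (Finite.equivFin (Quotient.mk r '' W)).symm
  choose χ hχW hχ using fun j => (e j).2
  refine ⟨_, χ, hχW, fun i j hij hr => hij (e.injective (Subtype.ext ?_)), fun ψ hψ =>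
    ⟨e.symm ⟨_, ψ, hψ, rfl⟩, Quotient.exact ?_⟩⟩
  · rw [← hχ, ← hχ]
    exact Quotient.sound hr
  · rw [hχ, Equiv.apply_symm_apply]

variable {k : Type*} [Field k] {N : Type*} [Fintype N] {S A : Matrix N N k}
  {m : ℕ} {l η : k}

theorem eq_sum_smul_of_hasWeight {ι J : Type*} [Fintype J] [DecidableEq J]
    {f : ι → Matrix N N k} (hspan : Submodule.span k {z | ∃ χ, HasWeight f χ z} = ⊤)
    {χ : J → ι → k} {b : J → ι} (hχb : ∀ i j, χ i (b j) = (Pi.single j 1 : J → k) i)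
    (hex : ∀ ψ, ψ ≠ 0 → (∃ z, z ≠ 0 ∧ HasWeight f ψ z) → ∃ j, ∃ t : k, ψ = t • χ j) (i : ι) :
    f i = ∑ j, χ j i • f (b j) := by
  classical
  refine toLin'.injective (LinearMap.ext_on hspan ?_)
  rintro z ⟨ψ, hz⟩
  rw [toLin'_apply, toLin'_apply, sum_mulVec]
  simp only [smul_mulVec, hz _, smul_smul, ← Finset.sum_smul]
  obtain rfl | hz0 := eq_or_ne z 0
  · rw [smul_zero, smul_zero]
  obtain rfl | hψ := eq_or_ne ψ 0
  · simp only [Pi.zero_apply, mul_zero, Finset.sum_const_zero]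
  obtain ⟨j, t, rfl⟩ := hex ψ hψ ⟨z, hz0, hz⟩
  simp [hχb, Pi.single_apply, mul_comm]

variable [DecidableEq N]

theorem exists_weight_transversal {ι : Type*} [NeZero m] (hη : IsPrimitiveRoot η m)
    {f : ι → Matrix N N k} (hcomm : ∀ i j, Commute (f i) (f j))
    (hss : ∀ i, IsSemisimpleMat (f i)) :
    ∃ (s : ℕ) (χ : Fin s → ι → k), (∀ j, χ j ≠ 0 ∧ ∃ z, z ≠ 0 ∧ HasWeight f (χ j) z) ∧
      (∀ i j a b, η ^ a • χ i = η ^ b • χ j → i = j) ∧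
      ∀ ψ, ψ ≠ 0 → (∃ z, z ≠ 0 ∧ HasWeight f ψ z) → ∃ j a, ψ = η ^ a • χ j := by
  let u : rootsOfUnity m k := hη.toRootsOfUnity
  have smul_eq (a : ℕ) (ψ : ι → k) : η ^ a • ψ = u ^ a • ψ := rfl
  obtain ⟨s, χ, hχ, hne, hex⟩ := exists_fin_transversal
    (MulAction.orbitRel (rootsOfUnity m k) (ι → k))
    ((finite_setOf_hasWeight hcomm hss).inter_of_right {ψ | ψ ≠ 0})
  refine ⟨s, χ, hχ, fun i j a b hab => ?_, fun ψ hψ hz => ?_⟩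
  · rw [smul_eq, smul_eq, ← eq_inv_smul_iff, ← mul_smul] at hab
    exact not_imp_comm.1 (@hne i j) (not_not_intro ⟨_, hab.symm⟩)
  · obtain ⟨j, ω, rfl⟩ := hex ψ ⟨hψ, hz⟩
    obtain ⟨a, -, ha⟩ := hη.eq_pow_of_pow_eq_one ((mem_rootsOfUnity' m _).1 ω.2)
    exact ⟨j, a, by rw [ha]; rfl⟩

theorem isFrame_seqMatrix {ι J : Type*} [Fintype J] [DecidableEq J] (hSA : S * A = Sᵀ)
    {p : ℕ} (hA : A ^ p = l • 1) (hl : l ^ 2 = 1) (hp : p ≠ 0) (hη : IsPrimitiveRoot η (2 * p))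
    {f : ι → Matrix N N k} (hf : ∀ i, IsAdjointPair S S (η • f i) (f i))
    {χ : J → ι → k} {v : J → ℕ → N → k} (hv : ∀ j, IsWeightString S A η f (χ j) (v j))
    (hχ : ∀ j, χ j ≠ 0) (hne : ∀ i j a b, η ^ a • χ i = η ^ b • χ j → i = j) :
    IsFrame S (blockShift l (2 * p) J)ᵀ (seqMatrix (2 * p) v)
      (blockShift l (2 * p) J * (seqMatrix (2 * p) v)ᵀ * S) := by
  have hη0 : η ≠ 0 := hη.ne_zero (by omega)
  have hvl (j : J) (i : ℕ) : v j (i + 2 * p) = l • v j i := (hv j).apply_add hA i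
  refine isFrame_of_gram hSA (blockShift_transpose_mul_self hl) ?_ ?_
  · rw [seqMatrix_mul_blockShift hvl, seqMatrix_mul_blockShift fun j i => by
      rw [add_right_comm, hvl]]
    ext a q
    exact congrFun ((hv q.2).mulVec_eq q.1) a
  · rw [Matrix.mul_assoc, seqMatrix_mul_blockShift hvl]
    ext q q'
    have entry : ((seqMatrix (2 * p) v)ᵀ * S * seqMatrix (2 * p) fun j i => v j (i + 1)) q q' =
        v q.2 q.1 ⬝ᵥ S *ᵥ v q'.2 (q'.1 + 1) := by
      rw [Matrix.mul_assoc]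
      rfl
    rw [entry]
    obtain rfl | hqq := eq_or_ne q q'
    · rw [(hv _).dotProduct_succ, Matrix.one_apply_eq]
    · rw [Matrix.one_apply_ne hqq]
      by_contra h
      have h := (hv q.2).eq_smul_of_dotProduct_ne_zero hη0 hf (hv q'.2) h
      obtain ⟨i, j⟩ := q
      obtain ⟨i', j'⟩ := q'
      obtain rfl := hne _ _ _ _ h
      refine hqq (Prod.ext (Fin.ext (hη.pow_inj i.2 i'.2 ?_)) rfl)
      exact (smul_left_injective k (hχ _) h).symm

theorem IsCartanSubspace.mem_of_commute {V c : Submodule k (Matrix N N k)}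
    (hc : IsCartanSubspace V c) {y : Matrix N N k} (hyV : y ∈ V) (hy : IsSemisimpleMat y)
    (hcomm : ∀ x ∈ c, Commute x y) : y ∈ c := by
  obtain ⟨hcV, hcc, hcs, hmax⟩ := hc
  have decompose {x} (hx : x ∈ c ⊔ Submodule.span k {y}) : ∃ z ∈ c, ∃ t : k, z + t • y = x := by
    simpa only [Submodule.mem_sup, Submodule.mem_span_singleton, exists_exists_eq_and] using hx
  rw [← hmax (c ⊔ Submodule.span k {y}) ⟨?_, ?_, ?_⟩ le_sup_left]
  · exact Submodule.mem_sup_right (Submodule.mem_span_singleton_self y)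
  · exact sup_le (α := Submodule k _) hcV ((Submodule.span_singleton_le_iff_mem _ _).2 hyV)
  · intro x₁ hx₁ x₂ hx₂
    obtain ⟨z₁, hz₁, t₁, rfl⟩ := decompose hx₁
    obtain ⟨z₂, hz₂, t₂, rfl⟩ := decompose hx₂
    have left : Commute (z₁ + t₁ • y) z₂ :=
      .add_left (hcc _ hz₁ _ hz₂) ((hcomm _ hz₂).symm.smul_left t₁)
    have right : Commute (z₁ + t₁ • y) y :=
      (hcomm _ hz₁).add_left ((Commute.refl y).smul_left t₁)
    exact left.add_right (right.smul_right t₂)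
  · intro x hx
    obtain ⟨z, hz, t, rfl⟩ := decompose hx
    exact (hcs z hz).add (hy.smul t) ((hcomm z hz).smul_right t)

theorem mem_pairSelfAdjointMatricesSubmodule_smul_iff {x : Matrix N N k} :
    x ∈ pairSelfAdjointMatricesSubmodule S (η • S) ↔ IsAdjointPair S S (η • x) x := by
  rw [mem_pairSelfAdjointMatricesSubmodule, IsAdjointPair, IsAdjointPair, transpose_smul,
    Matrix.mul_smul, Matrix.smul_mul]

variable {J : Type*} [Fintype J] [DecidableEq J] {U : Matrix N (Fin m × J) k}
  {V : Matrix (Fin m × J) N k}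

theorem IsCartanSubspace.mul_blockClock_mul_mem (hF : IsFrame S (blockShift l m J)ᵀ U V)
    (hη : η ^ m = 1) {c : Submodule k (Matrix N N k)}
    (hc : IsCartanSubspace (pairSelfAdjointMatricesSubmodule S (η • S)) c) {χ : J → c → k}
    (hU : ∀ x : c, x.1 * U = U * blockClock η m (χ · x))
    (hV : ∀ x : c, V * x.1 = blockClock η m (χ · x) * V) (t : J → k) :
    U * blockClock η m t * V ∈ c := by
  refine hc.mem_of_commute (mem_pairSelfAdjointMatricesSubmodule_smul_iff.2 ?_) ?_ fun x hx => ?_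
  · have := hF.isAdjointPair (isAdjointPair_blockClock hη t)
    rwa [Matrix.mul_smul, Matrix.smul_mul] at this
  · rw [blockClock_eq_diagonal]
    exact isSemisimpleMat_mul_diagonal_mul hF.coord_mul _
  · lift x to c using hx
    calc x.1 * (U * blockClock η m t * V)
        = U * (blockClock η m (χ · x) * blockClock η m t) * V := by
          rw [← Matrix.mul_assoc, ← Matrix.mul_assoc, hU, Matrix.mul_assoc U]
      _ = U * blockClock η m t * V * x.1 := by
          rw [(commute_blockClock _ _).eq, Matrix.mul_assoc _ V, hV]
          simp only [Matrix.mul_assoc]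

theorem IsCartanSubspace.exists_isFrame (hS : IsUnit S.det) (hSA : S * A = Sᵀ) {p : ℕ}
    (hA : A ^ p = l • 1) (hl : l ^ 2 = 1) (hp : p ≠ 0) (hη : IsPrimitiveRoot η (2 * p))
    {c : Submodule k (Matrix N N k)}
    (hc : IsCartanSubspace (pairSelfAdjointMatricesSubmodule S (η • S)) c) :
    ∃ (s : ℕ) (U : Matrix N (Fin (2 * p) × Fin s) k) (V : Matrix (Fin (2 * p) × Fin s) N k),
      IsFrame S (blockShift l (2 * p) (Fin s))ᵀ U V ∧
      Submodule.span k
        (Set.range fun j : Fin s => U * blockClock η (2 * p) (Pi.single j 1) * V) = c := by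
  have : NeZero (2 * p) := ⟨by omega⟩
  have hf (x : c) : IsAdjointPair S S (η • (x : Matrix N N k)) x :=
    mem_pairSelfAdjointMatricesSubmodule_smul_iff.1 (hc.1 x.2)
  have hcomm (x y : c) : Commute (x : Matrix N N k) y := hc.2.1 x x.2 y y.2
  have hss (x : c) : IsSemisimpleMat (x : Matrix N N k) := hc.2.2.1 x x.2
  have hspan := span_hasWeight_eq_top hcomm hss
  obtain ⟨s, χ, hχ, hne, hex⟩ := exists_weight_transversal hη hcomm hss
  have hstring (j : Fin s) : ∃ v, IsWeightString S A η _ (χ j) v :=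
    let ⟨_, hz0, hz⟩ := (hχ j).2
    hz.exists_isWeightString hS hSA hf hspan hz0
  choose v hv using hstring
  have hF := isFrame_seqMatrix hSA hA hl hp hη hf hv (fun j => (hχ j).1) hne
  have hU (x : c) := IsWeightString.mul_seqMatrix (m := 2 * p) hv x
  have hQ : blockShift l (2 * p) (Fin s) * (blockShift l (2 * p) (Fin s))ᵀ = 1 :=
    mul_eq_one_comm.1 (blockShift_transpose_mul_self hl)
  have hV (x : c) := hF.coord_mul_of_isAdjointPair hQ (hf x)
    (isAdjointPair_blockClock hη.pow_eq_one (χ · x))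
    (by rw [Matrix.smul_mul, hU, Matrix.mul_smul])
  have hmem := hc.mul_blockClock_mul_mem hF hη.pow_eq_one hU hV
  let b (j : Fin s) : c := ⟨_, hmem (Pi.single j 1)⟩
  have hχb (j : Fin s) : (χ · (b j)) = Pi.single j 1 := by
    refine mul_blockClock_mul_injective (η := η) hF.coord_mul ?_
    beta_reduce
    rw [← hU, Matrix.mul_assoc _ _ (seqMatrix _ _), hF.coord_mul, Matrix.mul_one]
  refine ⟨s, _, _, hF, le_antisymm ?_ fun x hx => ?_⟩
  · rw [Submodule.span_le, Set.range_subset_iff]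
    exact fun j => hmem _
  · lift x to c using hx
    rw [eq_sum_smul_of_hasWeight hspan (fun i j => congrFun (hχb j) i) (fun ψ hψ hz => ?_) x]
    · exact sum_mem fun j _ => Submodule.smul_mem _ _ (Submodule.subset_span ⟨j, rfl⟩)
    · obtain ⟨j, a, rfl⟩ := hex ψ hψ hz
      exact ⟨j, _, rfl⟩

end CartanSubspace

theorem pow_half_eq_neg_one {k : Type*} [Field k] {η : k} {m : ℕ} (hm : Even m) (hm0 : m ≠ 0)
    (hη : IsPrimitiveRoot η m) : η ^ (m / 2) = -1 :=
  (hη.pow (Nat.pos_of_ne_zero hm0) (Nat.div_mul_cancel hm.two_dvd).symm).eq_neg_one_of_two_right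

theorem forall_mem_mul_comm_iff {k : Type*} [CommRing k] {R : Type*} [Ring R] [Algebra k R]
    {ι : Type*} {b : ι → R} {c : Submodule k R} (hspan : Submodule.span k (Set.range b) = c)
    {x : R} : (∀ y ∈ c, x * y = y * x) ↔ ∀ j, Commute x (b j) := by
  have h : c ≤ (Subalgebra.centralizer k {x}).toSubmodule ↔ ∀ j, Commute x (b j) := by
    rw [← hspan, Submodule.span_le, Set.range_subset_iff]
    exact forall_congr' fun j => by simp [Set.mem_centralizer_iff, commute_iff_eq]
  rw [← h]
  exact forall₂_congr fun y _ => by simp [Subalgebra.mem_centralizer_iff]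

section WeylGroup

variable {k : Type*} [Field k] {N : Type*} [Fintype N] {S : Matrix N N k}
  {m : ℕ} {l η : k} {ι : Type*} [Fintype ι] [DecidableEq ι] {U : Matrix N (Fin m × ι) k}
  {V : Matrix (Fin m × ι) N k} {b : ι → Matrix N N k}

theorem mul_eq_zero_of_eq_mul_blockClock_mul (hVU : V * U = 1)
    (hb : ∀ j, b j = U * blockClock η m (Pi.single j 1) * V) :
    Pairwise fun i j => b i * b j = 0 := fun i j hij => by
  have h : blockClock η m (Pi.single i 1) * blockClock η m (Pi.single j 1) = 0 := by
    rw [blockClock_eq_diagonal, blockClock_eq_diagonal, diagonal_mul_diagonal, diagonal_eq_zero]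
    ext ⟨_, j'⟩
    obtain rfl | hj := eq_or_ne j' j
    · simp [hij.symm]
    · simp [hj]
  calc b i * b j = U * (blockClock η m (Pi.single i 1) * (V * U) *
        blockClock η m (Pi.single j 1)) * V := by rw [hb, hb]; simp only [Matrix.mul_assoc]
    _ = 0 := by rw [hVU, Matrix.mul_one, h, Matrix.mul_zero, Matrix.zero_mul]

theorem form_isometry_mul {h h' : Matrix N N k} (hh : hᵀ * S * h = S) (hh' : h'ᵀ * S * h' = S) :
    (h * h')ᵀ * S * (h * h') = S :=
  calc (h * h')ᵀ * S * (h * h') = h'ᵀ * (hᵀ * S * h) * h' := by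
        simp only [transpose_mul, Matrix.mul_assoc]
    _ = S := by rw [hh, hh']

variable [DecidableEq N]

theorem mul_mul_pow_succ {I : Type*} [Fintype I] [DecidableEq I] {U : Matrix N I k}
    {V : Matrix I N k} (hVU : V * U = 1) (X : Matrix I I k) (a : ℕ) :
    (U * X * V) ^ (a + 1) = U * X ^ (a + 1) * V := by
  induction a with
  | zero => simp only [zero_add, pow_one]
  | succ a ih =>
    rw [pow_succ, ih, pow_succ X (a + 1), ← Matrix.mul_assoc, ← Matrix.mul_assoc,
      Matrix.mul_assoc _ V, hVU, Matrix.mul_one, Matrix.mul_assoc U]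

theorem pow_succ_eq_self_of_eq_mul_blockClock_mul (hVU : V * U = 1) (hη : η ^ m = 1)
    (hb : ∀ j, b j = U * blockClock η m (Pi.single j 1) * V) (j : ι) : b j ^ (m + 1) = b j := by
  have h : blockClock η m (Pi.single j 1) ^ (m + 1) = blockClock η m (Pi.single j 1 : ι → k) := by
    rw [blockClock_eq_diagonal, diagonal_pow, diagonal_eq_diagonal_iff]
    rintro ⟨i, j'⟩
    obtain rfl | hj := eq_or_ne j' j
    · simp [pow_succ, pow_right_comm _ (i : ℕ) m, hη]
    · simp [hj]
  rw [hb, mul_mul_pow_succ hVU, h]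

theorem exists_perm_of_conj_eq_sum (hVU : V * U = 1) (hm : m ≠ 0) (hη : η ^ m = 1)
    (hb : ∀ j, b j = U * blockClock η m (Pi.single j 1) * V) {h : Matrix N N k}
    (hh : IsUnit h.det) {w : Matrix ι ι k} (hw : ∀ j, h * b j * h⁻¹ = ∑ i, w i j • b i) :
    ∃ σ : Equiv.Perm ι, (∀ i j, i ≠ σ j → w i j = 0) ∧ ∀ j, w (σ j) j ^ m = 1 := by
  have : NeZero m := ⟨hm⟩
  obtain ⟨φ, hφ⟩ := exists_algEquiv_conj hh
  refine exists_perm_of_algHom_of_orthogonal hm (mul_eq_zero_of_eq_mul_blockClock_mul hVU hb)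
    (pow_succ_eq_self_of_eq_mul_blockClock_mul hVU hη hb) ?_ (φ := φ) φ.injective
    fun j => (hφ (b j)).trans (hw j)
  rw [funext hb]
  exact linearIndependent_mul_blockClock_mul hVU

namespace IsFrame

theorem exists_isometry_of_monomial (hF : IsFrame S (blockShift l m ι)ᵀ U V) (hm : Even m)
    (hm0 : m ≠ 0) (hl : l ^ 2 = 1) (hη : IsPrimitiveRoot η m)
    (hb : ∀ j, b j = U * blockClock η m (Pi.single j 1) * V) {w : Matrix ι ι k}
    {σ : Equiv.Perm ι} (hσ : ∀ i j, i ≠ σ j → w i j = 0) (hw : ∀ j, w (σ j) j ^ m = 1) :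
    ∃ h : Matrix N N k, hᵀ * S * h = S ∧
      (∃ a : ℕ, h.det = (-l) ^ a ∧ η ^ a * ∏ j, w (σ j) j = 1) ∧
      ∀ j, h * b j = (∑ i, w i j • b i) * h := by
  have : NeZero m := ⟨hm0⟩
  have hw0 (j : ι) : w (σ j) j ≠ 0 := (pow_ne_zero_iff hm0).1 ((hw j).trans_ne one_ne_zero)
  have hroot (j : ι) : ∃ a : ℕ, η ^ a = (w (σ j) j)⁻¹ := by
    obtain ⟨a, -, ha⟩ := hη.eq_pow_of_pow_eq_one (by rw [inv_pow, hw j, inv_one] :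
      (w (σ j) j)⁻¹ ^ m = 1)
    exact ⟨a, ha⟩
  choose a ha using hroot
  obtain ⟨M, hM, hdet, hconj⟩ := exists_isometry_of_perm hm hm0 hl hη.pow_eq_one σ a
  obtain ⟨h, hS, hhdet, hU, hV⟩ := hF.exists_isometry hM
  refine ⟨h, hS, ⟨∑ j, a j, hhdet.trans hdet, ?_⟩, fun j => ?_⟩
  · rw [← Finset.prod_pow_eq_pow_sum, ← Finset.prod_mul_distrib]
    exact Finset.prod_eq_one fun j _ => by rw [ha, inv_mul_cancel₀ (hw0 j)]
  · have hMj : M * blockClock η m (Pi.single j 1) =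
        w (σ j) j • (blockClock η m (Pi.single (σ j) 1) * M) := by
      rw [hconj, ha, smul_inv_smul₀ (hw0 j)]
    rw [Finset.sum_eq_single (σ j) (fun i _ hi => by rw [hσ i j hi, zero_smul]) (by simp)]
    calc h * b j = U * (M * blockClock η m (Pi.single j 1)) * V := by
          rw [hb, ← Matrix.mul_assoc, ← Matrix.mul_assoc, hU, Matrix.mul_assoc U]
      _ = w (σ j) j • (U * blockClock η m (Pi.single (σ j) 1) * (M * V)) := by
          rw [hMj, Matrix.mul_smul, Matrix.smul_mul]
          simp only [Matrix.mul_assoc]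
      _ = w (σ j) j • b (σ j) * h := by
          rw [← hV, hb, Matrix.smul_mul]
          simp only [Matrix.mul_assoc]

theorem det_eq_one_of_commute (hF : IsFrame S (blockShift l m ι)ᵀ U V) (hm : Even m)
    (hl : l ≠ 0) (hη : IsPrimitiveRoot η m)
    (hb : ∀ j, b j = U * blockClock η m (Pi.single j 1) * V)
    (hcard : Fintype.card N ≤ m * Fintype.card ι) {x : Matrix N N k} (hx : xᵀ * S * x = S)
    (hcomm : ∀ j, Commute x (b j)) : x.det = 1 := by
  have hI : Fintype.card (Fin m × ι) = m * Fintype.card ι := by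
    rw [Fintype.card_prod, Fintype.card_fin]
  have hle : Fintype.card (Fin m × ι) ≤ Fintype.card N :=
    calc Fintype.card (Fin m × ι) = (V * U).rank := by rw [hF.coord_mul, rank_one]
      _ ≤ V.rank := rank_mul_le_left V U
      _ ≤ Fintype.card N := V.rank_le_card_width
  have hUV : U * V = 1 :=
    (mul_eq_one_comm_of_card_eq (R := k) (eq := hle.antisymm (hI ▸ hcard))).1 hF.coord_mul
  rw [← det_conj_of_mul_eq_one (N := x) hF.coord_mul hUV]
  refine det_eq_one_of_commute_blockClock hm hl hη (fun j => ?_) (hF.restrict_isometry hUV hx)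
  calc V * x * U * blockClock η m (Pi.single j 1)
      = V * (x * b j) * U := by
        rw [hb]; simp only [Matrix.mul_assoc, hF.coord_mul, Matrix.mul_one]
    _ = V * U * blockClock η m (Pi.single j 1) * (V * x * U) := by
        rw [(hcomm j).eq, hb]; simp only [Matrix.mul_assoc]
    _ = blockClock η m (Pi.single j 1) * (V * x * U) := by rw [hF.coord_mul, Matrix.one_mul]

end IsFrame

theorem isUnit_det_of_isometry (hS : IsUnit S.det) {h : Matrix N N k} (hh : hᵀ * S * h = S) :
    IsUnit h.det :=
  isUnit_of_mul_isUnit_right (x := (hᵀ * S).det) (by rwa [← det_mul, hh])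

theorem form_isometry_inv (hS : IsUnit S.det) {h : Matrix N N k} (hh : hᵀ * S * h = S) :
    h⁻¹ᵀ * S * h⁻¹ = S := by
  have hu := isUnit_det_of_isometry hS hh
  calc h⁻¹ᵀ * S * h⁻¹ = (h * h⁻¹)ᵀ * S * (h * h⁻¹) := by
        nth_rewrite 1 [← hh]
        simp only [transpose_mul, Matrix.mul_assoc]
    _ = S := by rw [mul_nonsing_inv _ hu, transpose_one, Matrix.one_mul, Matrix.mul_one]

section Groups

variable {r : ℕ} {c : Submodule k (Matrix N N k)} {U : Matrix N (Fin m × Fin r) k}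
  {V : Matrix (Fin m × Fin r) N k} {b : Fin r → Matrix N N k} {w : Matrix (Fin r) (Fin r) k}

theorem mem_gmqrSet_one_iff : w ∈ GmqrSet k m 1 r ↔
    ∃ σ : Equiv.Perm (Fin r), (∀ i j, i ≠ σ j → w i j = 0) ∧ ∀ j, w (σ j) j ^ m = 1 := by
  refine exists_congr fun σ => and_congr_right fun _ => and_iff_left_of_imp fun hw => ?_
  rw [Nat.div_one, ← Finset.prod_pow]
  exact Finset.prod_eq_one fun j _ => hw j

theorem mem_littleWeylSet_isometry_iff (hS : IsUnit S.det)
    (hspan : Submodule.span k (Set.range b) = c) :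
    w ∈ littleWeylSet {h | h.det = 1 ∧ hᵀ * S * h = S} c b ↔
      ∃ h : Matrix N N k, h.det = 1 ∧ hᵀ * S * h = S ∧
        ∀ j, h * b j = (∑ i, w i j • b i) * h := by
  rw [mem_littleWeylSet_iff (fun h hh => isUnit_det_of_isometry hS hh.2) hspan]
  refine exists_congr fun h => and_assoc.trans (and_congr_right fun _ => and_congr_right fun hh =>
    forall_congr' fun j => ?_)
  let _ := invertibleOfIsUnitDet h (isUnit_det_of_isometry hS hh)
  exact mul_inv_eq_iff_eq_mul_of_invertible _ _ _

namespace IsFrame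

theorem littleWeylSet_subset (hF : IsFrame S (blockShift l m (Fin r))ᵀ U V) (hS : IsUnit S.det)
    (hm0 : m ≠ 0) (hη : η ^ m = 1) (hb : ∀ j, b j = U * blockClock η m (Pi.single j 1) * V)
    (hspan : Submodule.span k (Set.range b) = c) :
    littleWeylSet {h | h.det = 1 ∧ hᵀ * S * h = S} c b ⊆ GmqrSet k m 1 r := by
  intro w hw
  obtain ⟨h, hh, hconj⟩ := (mem_littleWeylSet_iff
    (fun h hh => isUnit_det_of_isometry hS hh.2) hspan).1 hw
  exact mem_gmqrSet_one_iff.2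
    (exists_perm_of_conj_eq_sum hF.coord_mul hm0 hη hb (isUnit_det_of_isometry hS hh.2) hconj)

theorem littleWeylSet_eq_gmqrSet_one_of_neg_one (hF : IsFrame S (blockShift (-1) m (Fin r))ᵀ U V)
    (hS : IsUnit S.det) (hm : Even m) (hm0 : m ≠ 0) (hη : IsPrimitiveRoot η m)
    (hb : ∀ j, b j = U * blockClock η m (Pi.single j 1) * V)
    (hspan : Submodule.span k (Set.range b) = c) :
    littleWeylSet {h | h.det = 1 ∧ hᵀ * S * h = S} c b = GmqrSet k m 1 r := by
  refine (hF.littleWeylSet_subset hS hm0 hη.pow_eq_one hb hspan).antisymm fun w hw => ?_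
  obtain ⟨σ, hσ, hroot⟩ := mem_gmqrSet_one_iff.1 hw
  obtain ⟨h, hh, ⟨a, hdet, -⟩, hconj⟩ :=
    hF.exists_isometry_of_monomial hm hm0 neg_one_sq hη hb hσ hroot
  exact (mem_littleWeylSet_isometry_iff hS hspan).2
    ⟨h, by rw [hdet, neg_neg, one_pow], hh, hconj⟩

theorem exists_isometry_of_monomial_of_one (hF : IsFrame S (blockShift 1 m (Fin r))ᵀ U V)
    (hm : Even m) (hm0 : m ≠ 0) (hη : IsPrimitiveRoot η m)
    (hb : ∀ j, b j = U * blockClock η m (Pi.single j 1) * V) {σ : Equiv.Perm (Fin r)}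
    (hσ : ∀ i j, i ≠ σ j → w i j = 0) (hw : ∀ j, w (σ j) j ^ m = 1) :
    ∃ h : Matrix N N k, hᵀ * S * h = S ∧ (h.det = 1 ∨ h.det = -1) ∧
      h.det * (∏ j, w (σ j) j) ^ (m / 2) = 1 ∧ ∀ j, h * b j = (∑ i, w i j • b i) * h := by
  obtain ⟨h, hh, ⟨a, hdet, hprod⟩, hconj⟩ :=
    hF.exists_isometry_of_monomial hm hm0 (one_pow 2) hη hb hσ hw
  refine ⟨h, hh, hdet ▸ neg_one_pow_eq_or k a, ?_, hconj⟩
  rw [hdet, ← pow_half_eq_neg_one hm hm0 hη, pow_right_comm, ← mul_pow, hprod, one_pow]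

theorem littleWeylSet_eq_gmqrSet_one_of_exists (hF : IsFrame S (blockShift 1 m (Fin r))ᵀ U V)
    (hS : IsUnit S.det) (hm : Even m) (hm0 : m ≠ 0) (hη : IsPrimitiveRoot η m)
    (hb : ∀ j, b j = U * blockClock η m (Pi.single j 1) * V)
    (hspan : Submodule.span k (Set.range b) = c)
    (hx : ∃ x : Matrix N N k, x.det = -1 ∧ xᵀ * S * x = S ∧ ∀ j, Commute x (b j)) :
    littleWeylSet {h | h.det = 1 ∧ hᵀ * S * h = S} c b = GmqrSet k m 1 r := by
  refine (hF.littleWeylSet_subset hS hm0 hη.pow_eq_one hb hspan).antisymm fun w hw => ?_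
  obtain ⟨σ, hσ, hroot⟩ := mem_gmqrSet_one_iff.1 hw
  obtain ⟨h, hh, hdet | hdet, -, hconj⟩ :=
    hF.exists_isometry_of_monomial_of_one hm hm0 hη hb hσ hroot
  · exact (mem_littleWeylSet_isometry_iff hS hspan).2 ⟨h, hdet, hh, hconj⟩
  · obtain ⟨x, hxdet, hx, hcomm⟩ := hx
    refine (mem_littleWeylSet_isometry_iff hS hspan).2
      ⟨h * x, ?_, form_isometry_mul hh hx, fun j => ?_⟩
    · rw [det_mul, hdet, hxdet, neg_one_mul, neg_neg]
    · rw [Matrix.mul_assoc, (hcomm j).eq, ← Matrix.mul_assoc, hconj, Matrix.mul_assoc]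

theorem littleWeylSet_eq_gmqrSet_two_of_not_exists (hF : IsFrame S (blockShift 1 m (Fin r))ᵀ U V)
    (hS : IsUnit S.det) (hm : Even m) (hm0 : m ≠ 0) (hη : IsPrimitiveRoot η m)
    (hb : ∀ j, b j = U * blockClock η m (Pi.single j 1) * V)
    (hspan : Submodule.span k (Set.range b) = c)
    (hx : ¬∃ x : Matrix N N k, x.det = -1 ∧ xᵀ * S * x = S ∧ ∀ j, Commute x (b j)) :
    littleWeylSet {h | h.det = 1 ∧ hᵀ * S * h = S} c b = GmqrSet k m 2 r := by
  ext w
  rw [mem_littleWeylSet_isometry_iff hS hspan]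
  constructor
  · intro hw
    obtain ⟨σ, hσ, hroot⟩ := mem_gmqrSet_one_iff.1 (hF.littleWeylSet_subset hS hm0 hη.pow_eq_one hb
      hspan ((mem_littleWeylSet_isometry_iff hS hspan).2 hw))
    obtain ⟨h, hdet, hh, hconj⟩ := hw
    obtain ⟨h', hh', hdet' | hdet', hprod, hconj'⟩ :=
      hF.exists_isometry_of_monomial_of_one hm hm0 hη hb hσ hroot
    · exact ⟨σ, hσ, hroot, by rwa [hdet', one_mul] at hprod⟩
    · have hu := isUnit_det_of_isometry hS hh
      refine absurd ⟨h⁻¹ * h', ?_, form_isometry_mul (form_isometry_inv hS hh) hh', fun j => ?_⟩ hx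
      · rw [det_mul, det_nonsing_inv, hdet, hdet', Ring.inverse_one, one_mul]
      · calc h⁻¹ * h' * b j = h⁻¹ * (∑ i, w i j • b i) * h * (h⁻¹ * h') := by
              rw [Matrix.mul_assoc, hconj', ← Matrix.mul_assoc _ h⁻¹,
                mul_nonsing_inv_cancel_right _ _ hu, Matrix.mul_assoc]
          _ = b j * (h⁻¹ * h') := by
              rw [Matrix.mul_assoc h⁻¹, ← hconj, nonsing_inv_mul_cancel_left _ _ hu]
  · rintro ⟨σ, hσ, hroot, hhalf⟩
    obtain ⟨h, hh, -, hprod, hconj⟩ :=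
      hF.exists_isometry_of_monomial_of_one hm hm0 hη hb hσ hroot
    exact ⟨h, by rwa [hhalf, mul_one] at hprod, hh, hconj⟩

end IsFrame

theorem IsCartanSubspace.exists_basis_littleWeylSet {A : Matrix N N k} (hS : IsUnit S.det)
    (hSA : S * A = Sᵀ) {p : ℕ} (hA : A ^ p = l • 1) (hl : l ^ 2 = 1) (hp : p ≠ 0)
    (hη : IsPrimitiveRoot η (2 * p))
    (hc : IsCartanSubspace (pairSelfAdjointMatricesSubmodule S (η • S)) c)
    (hr : Module.finrank k c = r) :
    ∃ b : Fin r → Matrix N N k, LinearIndependent k b ∧ Submodule.span k (Set.range b) = c ∧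
      (l = -1 → littleWeylSet {h | h.det = 1 ∧ hᵀ * S * h = S} c b = GmqrSet k (2 * p) 1 r) ∧
      (l = 1 →
        ((∃ x : Matrix N N k, x.det = -1 ∧ xᵀ * S * x = S ∧ ∀ y ∈ c, x * y = y * x) →
          2 * p * r < Fintype.card N ∧
          littleWeylSet {h | h.det = 1 ∧ hᵀ * S * h = S} c b = GmqrSet k (2 * p) 1 r) ∧
        ((¬∃ x : Matrix N N k, x.det = -1 ∧ xᵀ * S * x = S ∧ ∀ y ∈ c, x * y = y * x) →
          littleWeylSet {h | h.det = 1 ∧ hᵀ * S * h = S} c b = GmqrSet k (2 * p) 2 r)) := by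
  obtain ⟨s, U, V, hF, hspan⟩ := hc.exists_isFrame hS hSA hA hl hp hη
  have hm0 : 2 * p ≠ 0 := mul_ne_zero two_ne_zero hp
  have hm : Even (2 * p) := even_two_mul p
  have : NeZero (2 * p) := ⟨hm0⟩
  have hli : LinearIndependent k fun j : Fin s => U * blockClock η (2 * p) (Pi.single j 1) * V :=
    linearIndependent_mul_blockClock_mul hF.coord_mul
  obtain rfl : s = r := by rw [← hr, ← hspan, finrank_span_eq_card hli, Fintype.card_fin]
  simp only [forall_mem_mul_comm_iff hspan]
  refine ⟨_, hli, hspan, ?_, ?_⟩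
  · rintro rfl
    exact hF.littleWeylSet_eq_gmqrSet_one_of_neg_one hS hm hm0 hη (fun _ => rfl) hspan
  · rintro rfl
    refine ⟨fun hx => ⟨?_, hF.littleWeylSet_eq_gmqrSet_one_of_exists hS hm hm0 hη (fun _ => rfl)
      hspan hx⟩, hF.littleWeylSet_eq_gmqrSet_two_of_not_exists hS hm hm0 hη (fun _ => rfl) hspan⟩
    obtain ⟨x, hdet, hx, hcomm⟩ := hx
    by_contra! hcard
    have hdet' := hF.det_eq_one_of_commute hm one_ne_zero hη (fun _ => rfl)
      (by rwa [Fintype.card_fin]) hx hcomm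
    refine hη.pow_ne_one_of_pos_of_lt (by omega) (by omega : 2 * p / 2 < 2 * p) ?_
    rw [pow_half_eq_neg_one hm hm0 hη, ← hdet, hdet']

end Groups

end WeylGroup

section OuterAutomorphism

variable {k : Type*} [Field k] {N : Type*} [Fintype N] [DecidableEq N] {g : Matrix N N k}

theorem outer_apply_eq_self_iff (hg : IsUnit g.det) {h : Matrix N N k} (hh : IsUnit h.det) :
    g * hᵀ⁻¹ * g⁻¹ = h ↔ hᵀ * g⁻¹ * h = g⁻¹ := by
  have hh' : IsUnit hᵀ.det := by rwa [det_transpose]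
  constructor <;> intro H
  · nth_rewrite 2 [← H]
    rw [Matrix.mul_assoc g, Matrix.mul_assoc, nonsing_inv_mul_cancel_left _ _ hg,
      mul_nonsing_inv_cancel_left _ _ hh']
  · rw [← H, Matrix.mul_assoc hᵀ, Matrix.mul_assoc, nonsing_inv_mul_cancel_left _ _ hh',
      mul_nonsing_inv_cancel_left _ _ hg]

theorem outer_outer_apply (hg : IsUnit g.det) {x : Matrix N N k} (hx : IsUnit x.det) :
    g * (g * xᵀ⁻¹ * g⁻¹)ᵀ⁻¹ * g⁻¹ = g * gᵀ⁻¹ * x * (g * gᵀ⁻¹)⁻¹ := by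
  simp only [transpose_mul, Matrix.mul_inv_rev, ← transpose_nonsing_inv, transpose_transpose,
    nonsing_inv_nonsing_inv _ hx, nonsing_inv_nonsing_inv _ hg, Matrix.mul_assoc]

theorem isUnit_det_mul_transpose_inv (hg : IsUnit g.det) : IsUnit (g * gᵀ⁻¹).det := by
  rw [det_mul, det_nonsing_inv, det_transpose]
  exact hg.mul hg.ringInverse

theorem outer_iterate_two_mul (hg : IsUnit g.det) {x : Matrix N N k} (hx : IsUnit x.det) (j : ℕ) :
    (fun y => g * yᵀ⁻¹ * g⁻¹)^[2 * j] x = (g * gᵀ⁻¹) ^ j * x * ((g * gᵀ⁻¹) ^ j)⁻¹ := by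
  induction j with
  | zero => simp
  | succ j ih =>
    have hA : IsUnit ((g * gᵀ⁻¹) ^ j).det := by
      rw [det_pow]
      exact (isUnit_det_mul_transpose_inv hg).pow j
    have hu : IsUnit ((g * gᵀ⁻¹) ^ j * x * ((g * gᵀ⁻¹) ^ j)⁻¹).det := by
      rwa [det_conj ((isUnit_iff_isUnit_det _).2 hA)]
    rw [mul_add_one, add_comm, Function.iterate_add_apply, ih]
    refine (outer_outer_apply hg hu).trans ?_
    rw [pow_succ', Matrix.mul_inv_rev (g * gᵀ⁻¹) ((g * gᵀ⁻¹) ^ j)]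
    simp only [Matrix.mul_assoc]

theorem exists_pow_eq_smul_one (hg : IsUnit g.det) {p : ℕ}
    (hord : ∀ x : Matrix N N k, x.det = 1 → (fun y => g * yᵀ⁻¹ * g⁻¹)^[2 * p] x = x) :
    ∃ l : k, (g * gᵀ⁻¹) ^ p = l • 1 := by
  have hA : IsUnit ((g * gᵀ⁻¹) ^ p).det := by
    rw [det_pow]
    exact (isUnit_det_mul_transpose_inv hg).pow p
  obtain ⟨l, hl⟩ : (g * gᵀ⁻¹) ^ p ∈ Set.range (scalar N) := by
    refine mem_range_scalar_of_commute_transvectionStruct fun t => ?_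
    let _ := invertibleOfIsUnitDet _ hA
    refine ((mul_inv_eq_iff_eq_mul_of_invertible _ _ _).1 ?_).symm
    rw [← outer_iterate_two_mul hg (by rw [t.det]; exact isUnit_one), hord _ t.det]
  exact ⟨l, by rw [← hl, smul_one_eq_diagonal, scalar_apply]⟩

theorem pow_two_eq_one_of_pow_eq_smul_one [Nonempty N] {S A : Matrix N N k} (hS : IsUnit S.det)
    (hSA : S * A = Sᵀ) {p : ℕ} {l : k} (hA : A ^ p = l • 1) : l ^ 2 = 1 := by
  have hpow (j : ℕ) : (A ^ j)ᵀ * S * A ^ j = S := by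
    induction j with
    | zero => simp
    | succ j ih =>
      rw [pow_succ]
      refine form_isometry_mul ih ?_
      rw [Matrix.mul_assoc, hSA, ← transpose_mul, hSA, transpose_transpose]
  have hS0 : S ≠ 0 := by
    rintro rfl
    exact hS.ne_zero det_zero
  refine smul_left_injective k hS0 ?_
  have h := hpow p
  rwa [hA, transpose_smul, transpose_one, Matrix.smul_mul, Matrix.one_mul, Matrix.smul_mul,
    Matrix.mul_smul, Matrix.mul_one, smul_smul, ← pow_two, ← one_smul k S, smul_smul, mul_one] at h

theorem setOf_outer_eq_smul (hg : IsUnit g.det) {ζ : k} (hζ0 : ζ ≠ 0) (hζ : ζ ≠ -1) :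
    {x | x.trace = 0 ∧ -(g * xᵀ * g⁻¹) = ζ • x} =
      (pairSelfAdjointMatricesSubmodule g⁻¹ ((-ζ)⁻¹ • g⁻¹) : Set (Matrix N N k)) := by
  ext x
  have hadj : -(g * xᵀ * g⁻¹) = ζ • x ↔ IsAdjointPair g⁻¹ g⁻¹ ((-ζ)⁻¹ • x) x := by
    let _ := invertibleOfIsUnitDet g hg
    rw [IsAdjointPair, transpose_smul, Matrix.smul_mul, inv_smul_eq_iff₀ (neg_ne_zero.2 hζ0),
      ← Matrix.mul_smul, eq_comm (a := xᵀ * g⁻¹), inv_mul_eq_iff_eq_mul_of_invertible, neg_smul,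
      neg_eq_iff_eq_neg, eq_comm, Matrix.mul_assoc]
  rw [SetLike.mem_coe, mem_pairSelfAdjointMatricesSubmodule_smul_iff, ← hadj]
  refine and_iff_right_of_imp fun h => ?_
  have htrace : -x.trace = ζ * x.trace := by
    rw [← smul_eq_mul, ← trace_smul, ← h, trace_neg, trace_mul_cycle, nonsing_inv_mul _ hg,
      Matrix.one_mul, trace_transpose]
  have h0 : (ζ + 1) * x.trace = 0 := by linear_combination -htrace
  exact (mul_eq_zero.1 h0).resolve_left fun h => hζ (eq_neg_of_add_eq_zero_left h)

end OuterAutomorphism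

theorem isPrimitiveRoot_inv_neg {k : Type*} [Field k] {ζ : k} {m : ℕ} (hm : Even m)
    (hm2 : Even (m / 2)) (hm0 : m ≠ 0) (hζ : IsPrimitiveRoot ζ m) : IsPrimitiveRoot (-ζ)⁻¹ m := by
  have hcop : (m / 2 + 1).Coprime m := by
    rw [← Nat.div_mul_cancel hm.two_dvd, Nat.mul_div_cancel _ two_pos]
    exact Nat.Coprime.mul_right ((Nat.coprime_self_add_left).2 (Nat.coprime_one_left _))
      (Nat.coprime_two_right.2 hm2.add_one)
  have h := hζ.pow_of_coprime _ hcop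
  rw [pow_succ, pow_half_eq_neg_one hm hm0 hζ, neg_one_mul] at h
  exact h.inv

theorem stmt16_general {k : Type*} [Field k] {N : Type*} [Fintype N] [DecidableEq N] [Nonempty N]
    {m : ℕ} (hm : 0 < m) (hmeven : Even m) (hm2even : Even (m / 2)) {ζ : k}
    (hζ : IsPrimitiveRoot ζ m) {g : Matrix N N k} (hg : IsUnit g.det)
    (hord : ∀ x : Matrix N N k, x.det = 1 → (fun y => g * yᵀ⁻¹ * g⁻¹)^[m] x = x)
    {c : Submodule k (Matrix N N k)}
    (hc : IsCartanSubspace {x | x.trace = 0 ∧ -(g * xᵀ * g⁻¹) = ζ • x} c)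
    {r : ℕ} (hr : Module.finrank k c = r) :
    ((g * gᵀ⁻¹) ^ (m / 2) = 1 ∨ (g * gᵀ⁻¹) ^ (m / 2) = -1) ∧
    ∃ b : Fin r → Matrix N N k, LinearIndependent k b ∧ Submodule.span k (Set.range b) = c ∧
      ((g * gᵀ⁻¹) ^ (m / 2) = -1 →
        littleWeylSet {h | h.det = 1 ∧ g * hᵀ⁻¹ * g⁻¹ = h} c b = GmqrSet k m 1 r) ∧
      ((g * gᵀ⁻¹) ^ (m / 2) = 1 →
        ((∃ x : Matrix N N k, x.det = -1 ∧ g * xᵀ⁻¹ * g⁻¹ = x ∧ ∀ y ∈ c, x * y = y * x) →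
          m * r < Fintype.card N ∧
          littleWeylSet {h | h.det = 1 ∧ g * hᵀ⁻¹ * g⁻¹ = h} c b = GmqrSet k m 1 r) ∧
        ((¬∃ x : Matrix N N k, x.det = -1 ∧ g * xᵀ⁻¹ * g⁻¹ = x ∧ ∀ y ∈ c, x * y = y * x) →
          littleWeylSet {h | h.det = 1 ∧ g * hᵀ⁻¹ * g⁻¹ = h} c b = GmqrSet k m 2 r)) := by
  have hη := isPrimitiveRoot_inv_neg hmeven hm2even hm.ne' hζ
  obtain ⟨p, rfl⟩ := hmeven.two_dvd
  rw [Nat.mul_div_cancel_left p two_pos] at hm2even ⊢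
  have hζ1 : ζ ≠ -1 := fun h => hη.ne_one (by grind) (by rw [h, neg_neg, inv_one])
  have hS : IsUnit g⁻¹.det := isUnit_nonsing_inv_det g hg
  have hSA : g⁻¹ * (g * gᵀ⁻¹) = g⁻¹ᵀ := by
    rw [nonsing_inv_mul_cancel_left _ _ hg, transpose_nonsing_inv]
  obtain ⟨l, hA⟩ := exists_pow_eq_smul_one hg hord
  have hl := pow_two_eq_one_of_pow_eq_smul_one hS hSA hA
  rw [setOf_outer_eq_smul hg (hζ.ne_zero hm.ne') hζ1] at hc
  have hfix (x : Matrix N N k) (hx : IsUnit x.det) := outer_apply_eq_self_iff hg hx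
  have hH : {h : Matrix N N k | h.det = 1 ∧ g * hᵀ⁻¹ * g⁻¹ = h} =
      {h | h.det = 1 ∧ hᵀ * g⁻¹ * h = g⁻¹} :=
    Set.ext fun h => and_congr_right fun h1 => hfix h (h1 ▸ isUnit_one)
  have hX : (∃ x : Matrix N N k, x.det = -1 ∧ g * xᵀ⁻¹ * g⁻¹ = x ∧ ∀ y ∈ c, x * y = y * x) ↔
      ∃ x : Matrix N N k, x.det = -1 ∧ xᵀ * g⁻¹ * x = g⁻¹ ∧ ∀ y ∈ c, x * y = y * x :=
    exists_congr fun x => and_congr_right fun hx =>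
      and_congr_left' (hfix x (hx ▸ isUnit_one.neg))
  obtain ⟨b, hli, hspan, hneg, hpos⟩ := hc.exists_basis_littleWeylSet hS hSA hA hl (by omega) hη hr
  have hinj := smul_left_injective k (one_ne_zero (α := Matrix N N k))
  rw [hH, hX, hA]
  refine ⟨?_, b, hli, hspan, fun h => hneg (hinj ?_), fun h => hpos (hinj ?_)⟩
  · exact (sq_eq_one_iff.1 hl).imp (by rintro rfl; simp) (by rintro rfl; simp)
  · simpa using h
  · simpa using h

/-- little Weyl group of an outer automorphism
`θ(x) = g·(ᵀx)⁻¹·g⁻¹` of `SL(n,k)` of order exactly `m` with `m/2` even.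
Then `(g·(ᵀg)⁻¹)^{m/2} = ±I`; if it is `-I` the little Weyl group (with
respect to a suitable basis of a Cartan subspace `c` of dimension `r`) is
`G(m,1,r)`; if it is `I`, it is `G(m,1,r)` when `n > mr` and some
`θ`-fixed `x ∈ GL(n,k)` of determinant `-1` commutes with every element of
`c`, and `G(m,2,r)` otherwise. -/
theorem stmt16 {k : Type*} [Field k] [IsAlgClosed k]
    (hchar : ringChar k = 0 ∨ 2 < ringChar k)
    (m : ℕ) (hm : 0 < m) (hmchar : ¬ (ringChar k ∣ m))
    (ζ : k) (hζ : IsPrimitiveRoot ζ m)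
    (n : ℕ) (hn : 3 ≤ n) (hnchar : ¬ (ringChar k ∣ n))
    (g : Matrix (Fin n) (Fin n) k) (hg : IsUnit g.det)
    (hordm : ∀ x : Matrix (Fin n) (Fin n) k, x.det = 1 →
      (fun y : Matrix (Fin n) (Fin n) k => g * (y.transpose)⁻¹ * g⁻¹)^[m] x = x)
    (hordleast : ∀ j : ℕ, 0 < j → j < m →
      ∃ x : Matrix (Fin n) (Fin n) k, x.det = 1 ∧
        (fun y : Matrix (Fin n) (Fin n) k => g * (y.transpose)⁻¹ * g⁻¹)^[j] x ≠ x)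
    (hmeven : Even m) (hm2even : Even (m / 2))
    (c : Submodule k (Matrix (Fin n) (Fin n) k))
    (hc : IsCartanSubspace
      {x | x.trace = 0 ∧ -(g * x.transpose * g⁻¹) = ζ • x} c)
    (r : ℕ) (hr : Module.finrank k c = r) :
    ((g * (g.transpose)⁻¹) ^ (m / 2) = 1 ∨ (g * (g.transpose)⁻¹) ^ (m / 2) = -1) ∧
    ∃ b : Fin r → Matrix (Fin n) (Fin n) k,
      LinearIndependent k b ∧ Submodule.span k (Set.range b) = c ∧
      ((g * (g.transpose)⁻¹) ^ (m / 2) = -1 →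
        littleWeylSet {h | h.det = 1 ∧ g * (h.transpose)⁻¹ * g⁻¹ = h} c b =
          GmqrSet k m 1 r) ∧
      ((g * (g.transpose)⁻¹) ^ (m / 2) = 1 →
        ((n > m * r ∧ ∃ x : Matrix (Fin n) (Fin n) k, x.det = -1 ∧
            g * (x.transpose)⁻¹ * g⁻¹ = x ∧ ∀ y ∈ c, x * y = y * x) →
          littleWeylSet {h | h.det = 1 ∧ g * (h.transpose)⁻¹ * g⁻¹ = h} c b =
            GmqrSet k m 1 r) ∧
        (¬ (n > m * r ∧ ∃ x : Matrix (Fin n) (Fin n) k, x.det = -1 ∧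
            g * (x.transpose)⁻¹ * g⁻¹ = x ∧ ∀ y ∈ c, x * y = y * x) →
          littleWeylSet {h | h.det = 1 ∧ g * (h.transpose)⁻¹ * g⁻¹ = h} c b =
            GmqrSet k m 2 r)) := by
  have : Nonempty (Fin n) := ⟨⟨0, by omega⟩⟩
  obtain ⟨hsign, b, hli, hspan, hneg, hpos⟩ :=
    stmt16_general hm hmeven hm2even hζ hg hordm hc hr
  rw [Fintype.card_fin] at hpos
  exact ⟨hsign, b, hli, hspan, hneg, fun h => ⟨fun hx => ((hpos h).1 hx.2).2,
    fun hx => (hpos h).2 fun hx' => hx ⟨((hpos h).1 hx').1, hx'⟩⟩⟩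
end

section
/- Let k be a field containing a primitive m-th root of unity (so the characteristic of k does not divide m), and let m, r be positive integers. Let W = G(m,1,r) ⊆ GL(r,k) be the group of r×r monomial matrices whose nonzero entries are m-th roots of unity, acting on the polynomial algebra k[x₁,…,x_r] by linear substitutions. Then the invariant algebra k[x₁,…,x_r]^W equals the k-subalgebra generated by the r polynomials e_j(x₁^m, …, x_r^m) for j = 1, …, r, where e_j is the j-th elementary symmetric polynomial; moreover these r generators are algebraically independent over k, so the invariant algebra is a polynomial ring in r variables. -/
/-- The linear substitution action of a matrix `w` on polynomials:
`x_i ↦ ∑_j w_{ij} x_j`. -/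
noncomputable def substAct {k : Type*} [Field k] {r : ℕ}
    (w : Matrix (Fin r) (Fin r) k) :
    MvPolynomial (Fin r) k →ₐ[k] MvPolynomial (Fin r) k :=
  MvPolynomial.aeval fun i => ∑ j : Fin r, MvPolynomial.C (w i j) * MvPolynomial.X j

/-- The polynomial `e_j(x₁^m, …, x_r^m)` — the `j`-th elementary symmetric
polynomial evaluated at the `m`-th powers of the variables. -/
noncomputable def powerEsymm (k : Type*) [Field k] (r m j : ℕ) :
    MvPolynomial (Fin r) k :=
  MvPolynomial.aeval (fun i : Fin r => (MvPolynomial.X i : MvPolynomial (Fin r) k) ^ m)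
    (MvPolynomial.esymm (Fin r) k j)

/- A diagonal matrix with entries `c_i` multiplies the monomial `x^d` by `∏ c_i ^ d_i`. Since `k`
contains a primitive `m`-th root of unity, a polynomial is therefore fixed by all diagonal matrices
in `G(m,1,r)` iff all its exponents are divisible by `m`, that is, iff it is the image of some `g`
under the injective map `x_i ↦ x_i ^ m`. This map commutes with permutations of the variables, so
being fixed by the permutation matrices means that `g` is symmetric, and the fundamental theorem of
symmetric polynomials, transported along the map, gives both assertions. -/

open MvPolynomial

section ScaleVars

variable {σ R : Type*} [CommSemiring R]

/-- The rescaling `x_i ↦ c_i x_i` of the variables. It extends substitution by the diagonal matrix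
with entries `c_i` to an arbitrary set of variables. -/
noncomputable def scaleVars (c : σ → R) : MvPolynomial σ R →ₐ[R] MvPolynomial σ R :=
  aeval fun i => C (c i) * X i

@[simp]
lemma scaleVars_X (c : σ → R) (i : σ) : scaleVars c (X i) = C (c i) * X i :=
  aeval_X _ i

@[simp]
lemma scaleVars_one : scaleVars (1 : σ → R) = AlgHom.id R (MvPolynomial σ R) := by
  ext1 i
  simp

lemma scaleVars_monomial (c : σ → R) (d : σ →₀ ℕ) (a : R) :
    scaleVars c (monomial d a) = monomial d ((d.prod fun i n => c i ^ n) * a) := by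
  simp only [scaleVars, aeval_monomial, mul_pow, Finsupp.prod_mul, algebraMap_eq, ← C_pow]
  rw [monomial_eq (s := d), C_mul, map_finsuppProd, mul_left_comm, mul_assoc]

lemma coeff_scaleVars (c : σ → R) (f : MvPolynomial σ R) (d : σ →₀ ℕ) :
    coeff d (scaleVars c f) = (d.prod fun i n => c i ^ n) * coeff d f := by
  classical
  induction f using MvPolynomial.induction_on' with
  | monomial e a =>
    rw [scaleVars_monomial, coeff_monomial, coeff_monomial]
    split_ifs with h
    · rw [h]
    · rw [mul_zero]
  | add p q hp hq => rw [map_add, coeff_add, coeff_add, hp, hq, mul_add]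

lemma scaleVars_eq_self_iff [IsCancelMulZero R] (c : σ → R) (f : MvPolynomial σ R) :
    scaleVars c f = f ↔ ∀ d ∈ f.support, (d.prod fun i n => c i ^ n) = 1 := by
  simp only [MvPolynomial.ext_iff, coeff_scaleVars, mem_support_iff]
  refine forall_congr' fun d => ?_
  by_cases hd : coeff d f = 0
  · simp only [hd, mul_zero, ne_eq, not_true_eq_false, false_imp_iff]
  · simp only [mul_eq_right₀ hd, ne_eq, hd, not_false_eq_true, true_imp_iff]

lemma mem_range_expand_iff {m : ℕ} {f : MvPolynomial σ R} :
    f ∈ (expand m : MvPolynomial σ R →ₐ[R] MvPolynomial σ R).range ↔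
      ∀ d ∈ f.support, ∀ i, m ∣ d i := by
  constructor
  · rintro ⟨g, rfl⟩ d hd i
    by_contra h
    exact mem_support_iff.1 hd (coeff_expand_of_not_dvd g h)
  · intro h
    rw [f.as_sum]
    refine Subalgebra.sum_mem _ fun d hd => ?_
    have hdiv : m • d.mapRange (· / m) (Nat.zero_div m) = d :=
      Finsupp.ext fun i => Nat.mul_div_cancel' (h d hd i)
    exact ⟨monomial (d.mapRange (· / m) (Nat.zero_div m)) (coeff d f),
      (expand_monomial m _ _).trans (by rw [hdiv])⟩

lemma forall_scaleVars_eq_self_iff_mem_range_expand [IsCancelMulZero R] {m : ℕ} {ζ : R}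
    (hζ : IsPrimitiveRoot ζ m) {f : MvPolynomial σ R} :
    (∀ c : σ → R, c ^ m = 1 → scaleVars c f = f) ↔
      f ∈ (expand m : MvPolynomial σ R →ₐ[R] MvPolynomial σ R).range := by
  classical
  simp only [scaleVars_eq_self_iff, mem_range_expand_iff]
  constructor
  · intro h d hd i
    have hsingle : (d.prod fun j n => (Pi.mulSingle i ζ : σ → R) j ^ n) = ζ ^ d i := by
      rw [Finsupp.prod_eq_single i, Pi.mulSingle_eq_same]
      · intro j _ hj
        rw [Pi.mulSingle_eq_of_ne hj, one_pow]
      · exact fun _ => pow_zero _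
    refine hζ.dvd_of_pow_eq_one _ (hsingle ▸ h (Pi.mulSingle i ζ) ?_ d hd)
    rw [← Pi.mulSingle_pow, hζ.pow_eq_one, Pi.mulSingle_one]
  · intro h c hc d hd
    refine Finset.prod_eq_one fun i _ => ?_
    obtain ⟨e, he⟩ := h d hd i
    calc c i ^ d i = ((c ^ m) i) ^ e := by rw [he, pow_mul, Pi.pow_apply]
      _ = 1 := by rw [hc, Pi.one_apply, one_pow]

lemma forall_scaleVars_rename_eq_self_iff_mem_map_expand [IsCancelMulZero R] {m : ℕ}
    (hm : 0 < m) {ζ : R} (hζ : IsPrimitiveRoot ζ m) {f : MvPolynomial σ R} :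
    (∀ (e : Equiv.Perm σ) (c : σ → R), c ^ m = 1 → scaleVars c (rename e f) = f) ↔
      f ∈ (symmetricSubalgebra σ R).map (expand m) := by
  constructor
  · intro h
    obtain ⟨g, rfl⟩ := (forall_scaleVars_eq_self_iff_mem_range_expand hζ).1 fun c hc => by
      simpa using h 1 c hc
    refine ⟨g, fun e => expand_injective hm ?_, rfl⟩
    simpa [rename_expand] using h e 1 (one_pow m)
  · rintro ⟨g, hg, rfl⟩ e c hc
    calc scaleVars c (rename e (expand m g)) = scaleVars c (expand m g) := by
          rw [rename_expand, hg e]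
      _ = expand m g := (forall_scaleVars_eq_self_iff_mem_range_expand hζ).2 ⟨g, rfl⟩ c hc

end ScaleVars

section Esymm

variable (σ R : Type*) [Fintype σ] [CommRing R] {n : ℕ}

lemma adjoin_range_esymm (hn : Fintype.card σ ≤ n) :
    Algebra.adjoin R (Set.range fun j : Fin n => esymm σ R (j + 1)) = symmetricSubalgebra σ R := by
  rw [Algebra.adjoin_range_eq_range_aeval]
  ext f
  constructor
  · rintro ⟨p, rfl⟩
    exact esymmAlgHom_apply (σ := σ) p ▸ (esymmAlgHom σ R n p).2
  · intro hf
    obtain ⟨p, hp⟩ := esymmAlgHom_surjective R hn ⟨f, hf⟩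
    exact ⟨p, (esymmAlgHom_apply p).symm.trans (congrArg Subtype.val hp)⟩

lemma algebraicIndependent_esymm (hn : n ≤ Fintype.card σ) :
    AlgebraicIndependent R (fun j : Fin n => esymm σ R (j + 1)) := by
  have haeval : ⇑(aeval fun j : Fin n => esymm σ R (j + 1)) = Subtype.val ∘ esymmAlgHom σ R n :=
    funext fun p => (esymmAlgHom_apply p).symm
  rw [algebraicIndependent_iff_injective_aeval, haeval]
  exact Subtype.val_injective.comp (esymmAlgHom_injective R hn)

end Esymm

section MonomialGroup

variable {k : Type*} [Field k] {m r : ℕ}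

lemma substAct_eq_scaleVars_comp_rename {w : Matrix (Fin r) (Fin r) k} {σ : Equiv.Perm (Fin r)}
    (hw : ∀ i j, i ≠ σ j → w i j = 0) :
    substAct w = (scaleVars fun j => w (σ j) j).comp (rename σ.symm) := by
  ext1 i
  rw [substAct, aeval_X, Finset.sum_eq_single (σ.symm i)]
  · simp
  · intro j _ hj
    rw [hw i j fun h => hj (by rw [h, σ.symm_apply_apply]), C_0, zero_mul]
  · simp

lemma forall_substAct_eq_self_iff_forall_scaleVars_rename {f : MvPolynomial (Fin r) k} :
    (∀ w ∈ GmqrSet k m 1 r, substAct w f = f) ↔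
      ∀ (σ : Equiv.Perm (Fin r)) (c : Fin r → k), c ^ m = 1 → scaleVars c (rename σ f) = f := by
  constructor
  · intro h σ c hc
    let w : Matrix (Fin r) (Fin r) k := .of fun i j => if i = σ.symm j then c j else 0
    have hw : ∀ i j, i ≠ σ.symm j → w i j = 0 := fun i j hij => if_neg hij
    have hentry : (fun j => w (σ.symm j) j) = c := funext fun j => if_pos rfl
    have hroot : ∀ j, w (σ.symm j) j ^ m = 1 := fun j => by
      rw [congrFun hentry j, ← Pi.pow_apply, hc, Pi.one_apply]
    have hprod : (∏ j, w (σ.symm j) j) ^ (m / 1) = 1 := by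
      rw [Nat.div_one, ← Finset.prod_pow]
      exact Finset.prod_eq_one fun j _ => hroot j
    have hfix := h w ⟨σ.symm, hw, hroot, hprod⟩
    rwa [substAct_eq_scaleVars_comp_rename hw, AlgHom.comp_apply, hentry, Equiv.symm_symm] at hfix
  · rintro h w ⟨σ, hw, hroot, -⟩
    rw [substAct_eq_scaleVars_comp_rename hw, AlgHom.comp_apply]
    exact h σ.symm _ (funext hroot)

lemma powerEsymm_eq_expand (j : ℕ) : powerEsymm k r m j = expand m (esymm (Fin r) k j) := by
  rw [powerEsymm, expand, aeval_eq_bind₁]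

end MonomialGroup

/-- the invariants of `G(m,1,r)` acting on `k[x₁,…,x_r]` by
linear substitutions form the subalgebra generated by
`e_j(x₁^m,…,x_r^m)`, `j = 1,…,r`, and these generators are algebraically
independent. -/
theorem stmt17 {k : Type*} [Field k] (m r : ℕ) (hm : 0 < m) (hr : 0 < r)
    (hprim : ∃ ζ : k, IsPrimitiveRoot ζ m) :
    {f : MvPolynomial (Fin r) k | ∀ w ∈ GmqrSet k m 1 r, substAct w f = f} =
      ↑(Algebra.adjoin k (Set.range fun j : Fin r => powerEsymm k r m ((j : ℕ) + 1))) ∧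
    AlgebraicIndependent k (fun j : Fin r => powerEsymm k r m ((j : ℕ) + 1)) := by
  obtain ⟨ζ, hζ⟩ := hprim
  have hcard : Fintype.card (Fin r) = r := Fintype.card_fin r
  have hgen : (fun j : Fin r => powerEsymm k r m (j + 1)) =
      expand m ∘ fun j : Fin r => esymm (Fin r) k (j + 1) := by
    funext j
    exact powerEsymm_eq_expand (j + 1)
  rw [hgen]
  constructor
  · rw [Set.range_comp, ← AlgHom.map_adjoin, adjoin_range_esymm _ _ hcard.le]
    ext f
    exact forall_substAct_eq_self_iff_forall_scaleVars_rename.trans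
      (forall_scaleVars_rename_eq_self_iff_mem_map_expand hm hζ)
  · exact (algebraicIndependent_esymm _ _ hcard.ge).map' (expand_injective hm)
end
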